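/- arXiv:math/0207027 — 2 statements merged into one kernel-verified Lean document; each statement's English description precedes it below -/
import Mathlib

section
/- Let Y be a length space such that there exists y ∈ Y with the property: for all r > 0 there exists R ≥ r such that the relative δ-covers B̃(y,r,R)^δ stabilize for all sufficiently small δ (i.e., there is δ₀ > 0 with B̃(y,r,R)^δ = B̃(y,r,R)^{δ₀} for all 0 < δ < δ₀). Then Y has a universal cover. -/
open Metric Set

/-- The length of a path, as the extended-real total variation of the map. -/
noncomputable def pathLength {X : Type*} [PseudoMetricSpace X] {x y : X} (γ : Path x y) :
    ENNReal :=
  eVariationOn (fun t => γ t) Set.univ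

/-- The induced (intrinsic) length pseudo-distance on a subset `A` of a metric space:
the infimum of lengths of continuous paths joining the two points and staying inside `A`. -/
noncomputable def intrinsicEDist {X : Type*} [PseudoMetricSpace X] (A : Set X) (x y : X) :
    ENNReal :=
  ⨅ (γ : Path x y) (_ : Set.range (fun t => γ t) ⊆ A), pathLength γ

/-- A metric space is a length space if its distance is the induced length metric. -/
def IsLengthSpace (X : Type*) [PseudoMetricSpace X] : Prop :=
  ∀ x y : X, edist x y = intrinsicEDist Set.univ x y

/-- A set `V` is evenly covered by `π` if its preimage is a disjoint union of open sets,
each mapped homeomorphically onto `V` by `π`. -/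
def EvenlyCovered {E X : Type*} [TopologicalSpace E] [TopologicalSpace X]
    (π : E → X) (V : Set X) : Prop :=
  ∃ (ι : Type) (W : ι → Set E), (∀ i, IsOpen (W i)) ∧
    Pairwise (Function.onFun Disjoint W) ∧ π ⁻¹' V = ⋃ i, W i ∧
    ∀ i, ∃ h : (W i) ≃ₜ V, ∀ w : W i, (h w : X) = π (w : E)

/-- `π : E → X` is a covering projection onto `X`. -/
def IsCoveringMapOnto {E X : Type*} [TopologicalSpace E] [TopologicalSpace X]
    (π : E → X) : Prop :=
  Function.Surjective π ∧ ∀ x : X, ∃ V : Set X, IsOpen V ∧ x ∈ V ∧ EvenlyCovered π V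

/-- `π : E → X` is a universal cover: it is a covering projection, and for any other
covering projection `π' : E' → X` there is a continuous map `f : E → E'` with `π' ∘ f = π`. -/
def IsUniversalCover {E X : Type*} [TopologicalSpace E] [TopologicalSpace X]
    (π : E → X) : Prop :=
  IsCoveringMapOnto π ∧ ∀ (E' : Type) [TopologicalSpace E'] (π' : E' → X),
    IsCoveringMapOnto π' → ∃ f : E → E', Continuous f ∧ π' ∘ f = π

/-- A covering space of the subset `A` of a metric space `Y`: a metric space `E` together
with a projection `π : E → Y` whose range is `A`, such that every point of `A` has a
neighborhood (in `A`) evenly covered by `π`. -/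
structure SetCover {Y : Type*} [MetricSpace Y] (A : Set Y) where
  E : Type
  [inst : MetricSpace E]
  π : E → Y
  range_eq : Set.range π = A
  evenly : ∀ x ∈ A, ∃ V : Set Y, IsOpen V ∧ x ∈ V ∧ EvenlyCovered π (V ∩ A)

attribute [instance] SetCover.inst

/-- A loop `γ` lifts closed through `π` if every lift of it is a closed path. -/
def LiftsClosed {E Y : Type*} [TopologicalSpace E] [TopologicalSpace Y]
    (π : E → Y) (γ : C(unitInterval, Y)) : Prop :=
  ∀ γ' : C(unitInterval, E), (∀ t, π (γ' t) = γ t) → γ' 0 = γ' 1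

/-- `γ` is a loop lying in `A`. -/
def IsLoopIn {Y : Type*} [TopologicalSpace Y] (A : Set Y) (γ : C(unitInterval, Y)) : Prop :=
  γ 0 = γ 1 ∧ ∀ t, γ t ∈ A

/-- `γ` lies in some open ball of radius `δ` centered in `A`. -/
def InSmallBall {Y : Type*} [MetricSpace Y] (A : Set Y) (δ : ℝ) (γ : C(unitInterval, Y)) :
    Prop :=
  ∃ c ∈ A, ∀ t, γ t ∈ Metric.ball c δ

/-- `γ` is null-homotopic through a homotopy staying in `A`. -/
def NullhomotopicIn {Y : Type*} [TopologicalSpace Y] (A : Set Y) (γ : C(unitInterval, Y)) :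
    Prop :=
  ∃ H : C(unitInterval × unitInterval, Y), (∀ s t, H (s, t) ∈ A) ∧
    (∀ t, H (0, t) = γ t) ∧ (∃ c, ∀ t, H (1, t) = c) ∧ ∀ s, H (s, 0) = H (s, 1)

/-- `C` is a relative `δ`-cover `B̃(y,r,R)^δ`: loops in `B(y,r)` lying in `δ`-balls of
`B(y,R)` lift closed, loops null-homotopic in `B(y,R)` lift closed, and `C` is maximal
(covers every other cover of `B(y,r)` with these two properties, in the sense of the
closed-lifting criterion). -/
def IsRelDeltaCover {Y : Type*} [MetricSpace Y] (y : Y) (r R δ : ℝ)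
    (C : SetCover (Metric.closedBall y r)) : Prop :=
  (∀ γ : C(unitInterval, Y), IsLoopIn (Metric.closedBall y r) γ →
      InSmallBall (Metric.closedBall y R) δ γ → LiftsClosed C.π γ) ∧
  (∀ γ : C(unitInterval, Y), IsLoopIn (Metric.closedBall y r) γ →
      NullhomotopicIn (Metric.closedBall y R) γ → LiftsClosed C.π γ) ∧
  ∀ C' : SetCover (Metric.closedBall y r),
    (∀ γ : C(unitInterval, Y), IsLoopIn (Metric.closedBall y r) γ →
        InSmallBall (Metric.closedBall y R) δ γ → LiftsClosed C'.π γ) →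
    (∀ γ : C(unitInterval, Y), IsLoopIn (Metric.closedBall y r) γ →
        NullhomotopicIn (Metric.closedBall y R) γ → LiftsClosed C'.π γ) →
    ∀ γ : C(unitInterval, Y), IsLoopIn (Metric.closedBall y r) γ →
      LiftsClosed C.π γ → LiftsClosed C'.π γ

/-- The group of deck transformations of a cover: isometric self-equivalences commuting
with the projection. -/
def Deck {Y : Type*} [MetricSpace Y] {A : Set Y} (C : SetCover A) :
    Subgroup (C.E ≃ᵢ C.E) where
  carrier := {g | ∀ e, C.π (g e) = C.π e}
  mul_mem' := by
    intro a b ha hb e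
    show C.π (a (b e)) = C.π e
    rw [ha, hb]
  one_mem' := fun e => rfl
  inv_mem' := by
    intro g hg e
    have h1 : g (g⁻¹ e) = e := by
      show g (g.symm e) = e
      simp
    have h2 := hg (g⁻¹ e)
    rw [h1] at h2
    exact h2.symm

section Helpers

open Topology Filter

/-- Constructor for `EvenlyCovered` from continuous local sections. -/
lemma evenlyCovered_mk {E X : Type*} [TopologicalSpace E] [TopologicalSpace X]
    {π : E → X} (hπ : Continuous π) {V : Set X} (ι : Type) (W : ι → Set E)
    (hW : ∀ i, IsOpen (W i)) (hd : ∀ i j w, w ∈ W i → w ∈ W j → i = j)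
    (hV : π ⁻¹' V = ⋃ i, W i) (s : ι → V → E) (hs : ∀ i, Continuous (s i))
    (hsW : ∀ i v, s i v ∈ W i) (hps : ∀ i v, π (s i v) = v)
    (hsp : ∀ i w (_ : w ∈ W i) (hv : π w ∈ V), s i ⟨π w, hv⟩ = w) :
    EvenlyCovered π V := by
  have hmem : ∀ i, ∀ w ∈ W i, π w ∈ V := fun i w hw => by
    have : w ∈ π ⁻¹' V := hV ▸ mem_iUnion.2 ⟨i, hw⟩
    exact this
  refine ⟨ι, W, hW, ?_, hV, fun i => ⟨
    { toFun := fun w => ⟨π w, hmem i w w.2⟩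
      invFun := fun v => ⟨s i v, hsW i v⟩
      left_inv := fun w => Subtype.ext (hsp i w w.2 _)
      right_inv := fun v => Subtype.ext (hps i v)
      continuous_toFun := by fun_prop
      continuous_invFun := Continuous.subtype_mk (hs i) _ }, fun w => rfl⟩⟩
  intro i j hij
  exact Set.disjoint_left.2 fun w h1 h2 => hij (hd i j w h1 h2)

/-- Eliminator for `EvenlyCovered`. -/
lemma EvenlyCovered.elim_sections {E X : Type*} [TopologicalSpace E] [TopologicalSpace X]
    {π : E → X} {V : Set X} (h : EvenlyCovered π V) :
    ∃ (ι : Type) (W : ι → Set E) (s : ι → V → E), (∀ i, IsOpen (W i)) ∧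
      (∀ i j w, w ∈ W i → w ∈ W j → i = j) ∧ π ⁻¹' V = (⋃ i, W i) ∧
      (∀ i, Continuous (s i)) ∧ (∀ i v, s i v ∈ W i) ∧ (∀ i v, π (s i v) = v) ∧
      (∀ i w (_ : w ∈ W i) (hv : π w ∈ V), s i ⟨π w, hv⟩ = w) ∧
      (∀ i, ContinuousOn π (W i)) := by
  obtain ⟨ι, W, hW, hd, hV, hh⟩ := h
  choose h hh using hh
  refine ⟨ι, W, fun i v => (h i).symm v, hW, ?_, hV, ?_, ?_, ?_, ?_, ?_⟩
  · intro i j w hi hj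
    by_contra hij
    exact Set.disjoint_left.1 (hd hij) hi hj
  · intro i
    exact continuous_subtype_val.comp (h i).symm.continuous
  · intro i v
    exact ((h i).symm v).2
  · intro i v
    rw [← hh]; simp
  · intro i w hw hv
    have : (⟨π w, hv⟩ : V) = h i ⟨w, hw⟩ := Subtype.ext (hh i ⟨w, hw⟩).symm
    rw [this]; simp
  · intro i
    rw [continuousOn_iff_continuous_domRestrict]
    have : (W i).domRestrict π = fun w => ((h i w : V) : X) := by
      funext w; exact (hh i w).symm
    rw [this]
    exact continuous_subtype_val.comp (h i).continuous

lemma IsCoveringMapOnto.isCov {E X : Type*} [TopologicalSpace E] [TopologicalSpace X]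
    {π : E → X} (h : IsCoveringMapOnto π) : IsCoveringMap π := by
  intro x
  obtain ⟨V, hVo, hxV, hE⟩ := h.2 x
  obtain ⟨ι, W, s, hW, hd, hV, hs, hsW, hps, hsp, hc⟩ := hE.elim_sections
  let _ : TopologicalSpace ι := ⊥
  have : DiscreteTopology ι := ⟨rfl⟩
  have hex : ∀ w : π ⁻¹' V, ∃ i, (w : E) ∈ W i := fun w => by
    have : (w : E) ∈ ⋃ i, W i := hV.subset w.2
    exact mem_iUnion.1 this
  choose idx hidx using hex
  have hsub : ∀ i, W i ⊆ π ⁻¹' V := fun i => hV ▸ subset_iUnion W i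
  refine IsEvenlyCovered.to_isEvenlyCovered_preimage (I := ι)
    ⟨inferInstance, V, hxV, hVo, hV ▸ isOpen_iUnion hW,
      { toFun := fun w => (⟨π w, w.2⟩, idx w)
        invFun := fun v => ⟨s v.2 v.1, hsub v.2 (hsW _ _)⟩
        left_inv := fun w => Subtype.ext (hsp _ _ (hidx w) _)
        right_inv := fun v => Prod.ext (Subtype.ext (hps _ _))
          (hd _ _ _ (hidx ⟨s v.2 v.1, hsub v.2 (hsW _ _)⟩) (hsW _ _))
        continuous_toFun := ?_
        continuous_invFun := ?_ }, fun w => rfl⟩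
  · refine Continuous.prodMk (Continuous.subtype_mk ?_ _) ?_
    · rw [continuous_iff_continuousAt]
      intro w
      exact ((hc _).continuousAt ((hW _).mem_nhds (hidx w))).comp
        continuous_subtype_val.continuousAt
    · rw [continuous_iff_continuousAt]
      intro w
      refine ContinuousAt.congr (f := fun _ => idx w) continuousAt_const ?_
      have : ∀ᶠ w' : π ⁻¹' V in 𝓝 w, (w' : E) ∈ W (idx w) :=
        continuous_subtype_val.continuousAt ((hW _).mem_nhds (hidx w))
      filter_upwards [this] with w' hw'
      exact hd _ _ _ hw' (hidx w')
  · refine Continuous.subtype_mk ?_ _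
    rw [continuous_prod_of_discrete_right]
    exact hs

/-- loops inside an evenly covered set lift closed -/
lemma liftsClosed_of_evenlyCovered {E X : Type*} [TopologicalSpace E] [TopologicalSpace X]
    {π : E → X} {V : Set X} (h : EvenlyCovered π V) (γ : C(unitInterval, X))
    (h01 : γ 0 = γ 1) (hγ : ∀ t, γ t ∈ V) : LiftsClosed π γ := by
  intro Γ hΓ
  obtain ⟨ι, W, s, hW, hd, hV, hs, hsW, hps, hsp, hc⟩ := h.elim_sections
  have hex : ∀ t, ∃ i, Γ t ∈ W i := fun t => by
    have : Γ t ∈ π ⁻¹' V := by rw [mem_preimage, hΓ]; exact hγ t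
    rw [hV] at this
    exact mem_iUnion.1 this
  choose idx hidx using hex
  have hl : IsLocallyConstant idx := by
    rw [IsLocallyConstant.iff_eventually_eq]
    intro t
    have : ∀ᶠ t' in 𝓝 t, Γ t' ∈ W (idx t) :=
      Γ.continuous.continuousAt ((hW _).mem_nhds (hidx t))
    filter_upwards [this] with t' ht'
    exact hd _ _ _ (hidx t') ht'
  have he : idx 0 = idx 1 := hl.apply_eq_of_preconnectedSpace 0 1
  have h0 := hidx 0
  have h1 := hidx 1
  rw [← he] at h1
  rw [← hsp _ _ h0 (by rw [hΓ]; exact hγ 0), ← hsp _ _ h1 (by rw [hΓ]; exact hγ 1)]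
  congr 2
  rw [hΓ, hΓ, h01]

lemma liftsClosed_of_nullhomotopic {E X : Type*} [TopologicalSpace E] [TopologicalSpace X]
    {π : E → X} (cov : IsCoveringMap π) {A : Set X} {γ : C(unitInterval, X)}
    (h : NullhomotopicIn A γ) : LiftsClosed π γ := by
  intro Γ hΓ
  obtain ⟨H, -, H0, ⟨c, H1⟩, Hl⟩ := h
  have hH0 : ∀ a, H (0, a) = π (Γ a) := fun a => by rw [H0, hΓ]
  set G := cov.liftHomotopy H Γ hH0 with hG
  have hGl : ∀ s t, π (G (s, t)) = H (s, t) := fun s t =>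
    congr_fun (cov.liftHomotopy_lifts H Γ hH0) (s, t)
  have hG0 : ∀ a, G (0, a) = Γ a := cov.liftHomotopy_zero H Γ hH0
  have hc : G (1, 0) = G (1, 1) :=
    cov.const_of_comp (g := fun t => G (1, t)) (by fun_prop)
      (fun a a' => by rw [hGl, hGl, H1, H1]) 0 1
  have := cov.eq_of_comp_eq (g₁ := fun s => G (s, 0)) (g₂ := fun s => G (s, 1))
    (by fun_prop) (by fun_prop) (by funext s; simp [hGl, Hl]) 1 hc
  have := congr_fun this 0
  simpa [hG0] using this


lemma metrizable_of_coveringMapOnto {E : Type} {Y : Type*} [TopologicalSpace E] [MetricSpace Y]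
    [SecondCountableTopology Y] {π : E → Y} (hp : IsCoveringMapOnto π) :
    TopologicalSpace.MetrizableSpace E := by
  classical
  have hπ : Continuous π := hp.isCov.continuous
  have hloc : ∀ x : Y, ∃ (ρ : ℝ) (ι : Type) (W : ι → Set E), 0 < ρ ∧ (∀ i, IsOpen (W i)) ∧
      (∀ i j w, w ∈ W i → w ∈ W j → i = j) ∧ (∀ w, π w ∈ ball x ρ → ∃ i, w ∈ W i) ∧
      (∀ i w w', w ∈ W i → w' ∈ W i → π w = π w' → w = w') := by
    intro x
    obtain ⟨V, hVo, hxV, hE⟩ := hp.2 x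
    obtain ⟨ι, W, s, hW, hd, hV, hs, hsW, hps, hsp, hc⟩ := hE.elim_sections
    obtain ⟨ρ, hρ, hb⟩ := Metric.isOpen_iff.1 hVo x hxV
    refine ⟨ρ, ι, W, hρ, hW, hd, ?_, ?_⟩
    · intro w hw
      have : w ∈ ⋃ i, W i := hV.subset (hb hw)
      exact mem_iUnion.1 this
    · intro i w w' hw hw' h
      have m : π w ∈ V := hV.symm.subset (mem_iUnion.2 ⟨i, hw⟩)
      have m' : π w' ∈ V := hV.symm.subset (mem_iUnion.2 ⟨i, hw'⟩)
      rw [← hsp i w hw m, ← hsp i w' hw' m']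
      congr 2
  choose ρ ι W hρ hW hd hcov hinj using hloc
  obtain ⟨S, hS, hSU⟩ := TopologicalSpace.countable_cover_nhds
    (fun x => Metric.ball_mem_nhds x (hρ x))
  let _ : ∀ x, TopologicalSpace (ι x) := fun x => ⊥
  have : ∀ x, DiscreteTopology (ι x) := fun x => ⟨rfl⟩
  let φ : Y → Y → ℝ := fun x z => max 0 (ρ x - dist z x)
  have hφc : ∀ x, Continuous (φ x) := fun x => by fun_prop
  have hφ0 : ∀ x z, 0 ≤ φ x z := fun x z => le_max_left _ _
  have hφ1 : ∀ x z, φ x z ≤ ρ x := fun x z =>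
    max_le (hρ x).le (by linarith [dist_nonneg (x := z) (y := x)])
  have hφp : ∀ x z, 0 < φ x z ↔ z ∈ ball x (ρ x) := fun x z => by
    simp [φ, Metric.mem_ball]
  let val : ∀ x, E → ι x → ℝ := fun x e i => if e ∈ W x i then φ x (π e) else 0
  have hv0 : ∀ x e i, 0 ≤ val x e i := fun x e i => by
    simp only [val]; split_ifs; exacts [hφ0 _ _, le_rfl]
  have hv1 : ∀ x e i, val x e i ≤ φ x (π e) := fun x e i => by
    simp only [val]; split_ifs; exacts [le_rfl, hφ0 _ _]
  let Φ : ∀ x, E → BoundedContinuousFunction (ι x) ℝ := fun x e =>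
    BoundedContinuousFunction.ofNormedAddCommGroupDiscrete (val x e) (ρ x) (fun i => by
      rw [Real.norm_eq_abs, abs_of_nonneg (hv0 x e i)]
      exact (hv1 x e i).trans (hφ1 _ _))
  have hΦ : ∀ x e i, Φ x e i = val x e i := fun x e i => rfl
  have hΦc : ∀ x, Continuous (Φ x) := by
    intro x
    rw [continuous_iff_continuousAt]
    intro e₀
    rw [ContinuousAt, Metric.tendsto_nhds]
    intro ε hε
    have hcl : ∀ᶠ e in 𝓝 e₀, dist (φ x (π e)) (φ x (π e₀)) < ε / 2 :=
      Metric.tendsto_nhds.1 (((hφc x).comp hπ).continuousAt (x := e₀)) (ε / 2) (by positivity)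
    by_cases h0 : 0 < φ x (π e₀)
    · obtain ⟨i, hi⟩ := hcov x e₀ ((hφp _ _).1 h0)
      filter_upwards [hcl, (hW x i).mem_nhds hi] with e he hei
      refine lt_of_le_of_lt ((BoundedContinuousFunction.dist_le (C := ε / 2) (by positivity)).2
        fun j => ?_) (by linarith)
      rw [hΦ, hΦ]
      by_cases hj : j = i
      · subst hj
        simp only [val, if_pos hei, if_pos hi]
        exact he.le
      · have h1 : e ∉ W x j := fun h => hj (hd x _ _ _ h hei)
        have h2 : e₀ ∉ W x j := fun h => hj (hd x _ _ _ h hi)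
        simp only [val, if_neg h1, if_neg h2, dist_self]
        positivity
    · have h0' : φ x (π e₀) = 0 := le_antisymm (not_lt.1 h0) (hφ0 _ _)
      filter_upwards [hcl] with e he
      refine lt_of_le_of_lt ((BoundedContinuousFunction.dist_le (C := ε / 2) (by positivity)).2
        fun j => ?_) (by linarith)
      rw [hΦ, hΦ]
      have e1 : val x e₀ j = 0 := le_antisymm (h0' ▸ hv1 x e₀ j) (hv0 _ _ _)
      rw [h0', Real.dist_eq, sub_zero, abs_of_nonneg (hφ0 _ _)] at he
      rw [e1, Real.dist_eq, sub_zero, abs_of_nonneg (hv0 _ _ _)]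
      exact (hv1 _ _ _).trans he.le
  have : Countable S := hS.to_subtype
  let Ψ : E → Y × (∀ x : S, BoundedContinuousFunction (ι x) ℝ) := fun e => (π e, fun x => Φ x e)
  have hΨc : Continuous Ψ := hπ.prodMk (continuous_pi fun x => hΦc x)
  have hfind : ∀ e, ∃ x : S, ∃ i, e ∈ W x i ∧ 0 < Φ x e i := by
    intro e
    have : π e ∈ ⋃ x ∈ S, ball x (ρ x) := hSU ▸ mem_univ _
    simp only [mem_iUnion] at this
    obtain ⟨x, hx, he⟩ := this
    obtain ⟨i, hi⟩ := hcov x e he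
    refine ⟨⟨x, hx⟩, i, hi, ?_⟩
    rw [hΦ]
    simp only [val, if_pos hi]
    exact (hφp _ _).2 he
  have hpos : ∀ x e i, 0 < Φ x e i → e ∈ W x i := by
    intro x e i h
    by_contra hn
    rw [hΦ] at h
    simp [val, if_neg hn] at h
  have hemb : IsEmbedding Ψ := by
    refine ⟨⟨?_⟩, ?_⟩
    · refine le_antisymm hΨc.le_induced ?_
      refine le_of_nhds_le_nhds fun e₀ => ?_
      rw [nhds_induced]
      intro O hO
      obtain ⟨x, i, hi, hpi⟩ := hfind e₀
      have hN : O ∩ W x i ∈ 𝓝 e₀ := inter_mem hO ((hW x i).mem_nhds hi)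
      have hI : π '' (O ∩ W x i) ∈ 𝓝 (π e₀) := hp.isCov.isOpenMap.image_mem_nhds hN
      have t1 : ∀ᶠ z in 𝓝 (Ψ e₀), z.1 ∈ π '' (O ∩ W x i) :=
        continuous_fst.continuousAt (x := Ψ e₀) hI
      have c2 : Continuous (fun z : Y × (∀ x : S, BoundedContinuousFunction (ι x) ℝ) =>
          z.2 x i) :=
        (continuous_eval_const i).comp
          ((continuous_apply x).comp continuous_snd)
      have t2 : ∀ᶠ z in 𝓝 (Ψ e₀), 0 < z.2 x i :=
        c2.continuousAt.eventually (lt_mem_nhds hpi)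
      refine mem_comap.2 ⟨_, t1.and t2, ?_⟩
      rintro e ⟨⟨e', ⟨he'O, he'W⟩, hee⟩, h2⟩
      have := hinj x i _ _ he'W (hpos _ _ _ h2) hee
      exact this ▸ he'O
    · intro e e' h
      obtain ⟨x, i, hi, hpi⟩ := hfind e
      have h1 : π e = π e' := congrArg Prod.fst h
      have h2 : Φ x e = Φ x e' := congr_fun (congrArg Prod.snd h) x
      rw [h2] at hpi
      exact hinj x i _ _ hi (hpos _ _ _ hpi) h1
  exact hemb.metrizableSpace

/-- Restriction of a covering of `Y` to a subset. -/
lemma exists_setCover {E : Type} {Y : Type*} [TopologicalSpace E] [MetricSpace Y]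
    [SecondCountableTopology Y] {π : E → Y} (hp : IsCoveringMapOnto π) (A : Set Y) :
    ∃ C : SetCover A, ∀ γ : C(unitInterval, Y), (∀ t, γ t ∈ A) →
      (LiftsClosed C.π γ ↔ LiftsClosed π γ) := by
  have := metrizable_of_coveringMapOnto hp
  have hπ : Continuous π := hp.isCov.continuous
  let m : MetricSpace (π ⁻¹' A) := TopologicalSpace.metrizableSpaceMetric (π ⁻¹' A)
  refine ⟨{ E := π ⁻¹' A, inst := m, π := fun e => π e, range_eq := ?_, evenly := ?_ }, ?_⟩
  · ext x
    constructor
    · rintro ⟨e, rfl⟩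
      exact e.2
    · intro hx
      obtain ⟨e, rfl⟩ := hp.1 x
      exact ⟨⟨e, hx⟩, rfl⟩
  · intro x hx
    obtain ⟨V, hVo, hxV, hE⟩ := hp.2 x
    obtain ⟨ι, W, s, hW, hd, hV, hs, hsW, hps, hsp, hc⟩ := hE.elim_sections
    refine ⟨V, hVo, hxV, evenlyCovered_mk (by fun_prop) ι (fun i => Subtype.val ⁻¹' W i)
      (fun i => (hW i).preimage continuous_subtype_val) (fun i j w => hd i j w) ?_
      (fun i v => ⟨s i ⟨v, v.2.1⟩, by rw [mem_preimage, hps]; exact v.2.2⟩) ?_ ?_ ?_ ?_⟩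
    · ext w
      have : (w : E) ∈ π ⁻¹' V ↔ (w : E) ∈ ⋃ i, W i := by rw [hV]
      have hw : π w ∈ A := w.2
      simp only [mem_preimage, mem_iUnion] at this
      simp [this, hw]
    · intro i
      exact Continuous.subtype_mk ((hs i).comp (by fun_prop)) _
    · intro i v
      exact hsW i _
    · intro i v
      exact hps i _
    · intro i w hw hv
      exact Subtype.ext (hsp i _ hw hv.1)
  · intro γ hγ
    constructor
    · intro h Γ hΓ
      have := h ⟨fun t => ⟨Γ t, by rw [mem_preimage, hΓ]; exact hγ t⟩, by fun_prop⟩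
        (fun t => hΓ t)
      exact congrArg Subtype.val this
    · intro h Γ hΓ
      exact Subtype.ext (h ⟨fun t => (Γ t : E), by fun_prop⟩ hΓ)

/-- Small loops lift closed to every covering. -/
lemma small_loops {Y : Type*} [MetricSpace Y] [ProperSpace Y]
    (y : Y)
    (hstab : ∀ r > 0, ∃ R ≥ r, ∃ δ₀ > 0, ∃ C : SetCover (Metric.closedBall y r),
      IsRelDeltaCover y r R δ₀ C ∧ ∀ δ, 0 < δ → δ < δ₀ → IsRelDeltaCover y r R δ C) (x : Y) :
    ∃ ρ > 0, ∀ γ : C(unitInterval, Y), γ 0 = γ 1 → (∀ t, γ t ∈ ball x ρ) →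
      ∀ (E : Type) [TopologicalSpace E] (π : E → Y), IsCoveringMapOnto π → LiftsClosed π γ := by
  obtain ⟨r, hr⟩ : ∃ r, r = dist x y + 1 := ⟨_, rfl⟩
  obtain ⟨R, hR, δ₀, hδ₀, C, hC0, hC⟩ := hstab r (by rw [hr]; positivity)
  refine ⟨min 1 δ₀, by positivity, ?_⟩
  intro γ h01 hγ E _ π hp
  have hγr : ∀ t, γ t ∈ closedBall y r := fun t => by
    have h1 : dist (γ t) x < 1 := ball_subset_ball (min_le_left _ _) (hγ t)
    rw [mem_closedBall]
    linarith [dist_triangle (γ t) x y]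
  have hCl : LiftsClosed C.π γ := hC0.1 γ ⟨h01, hγr⟩
    ⟨x, by rw [mem_closedBall]; linarith, fun t => ball_subset_ball (min_le_right _ _) (hγ t)⟩
  obtain ⟨C', hC'⟩ := exists_setCover hp (closedBall y r)
  choose V hVo hxV hE using hp.2
  obtain ⟨δ₁, hδ₁, hleb⟩ := lebesgue_number_lemma_of_metric (isCompact_closedBall y R) hVo
    (fun z _ => mem_iUnion.2 ⟨z, hxV z⟩)
  have := (hC (min δ₁ (δ₀ / 2)) (by positivity)
    ((min_le_right _ _).trans_lt (by linarith))).2.2 C' ?_ ?_ γ ⟨h01, hγr⟩ hCl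
  · exact (hC' γ hγr).1 this
  · rintro γ ⟨hl, hA⟩ ⟨c, hc, hb⟩
    obtain ⟨z, hz⟩ := hleb c hc
    exact (hC' γ hA).2 (liftsClosed_of_evenlyCovered (hE z) γ hl
      fun t => hz (ball_subset_ball (min_le_left _ _) (hb t)))
  · rintro γ ⟨hl, hA⟩ hN
    exact (hC' γ hA).2 (liftsClosed_of_nullhomotopic hp.isCov hN)

lemma exists_path_ball {Y : Type*} [MetricSpace Y] (hY : IsLengthSpace Y) {x z : Y} {ε : ℝ}
    (h : z ∈ ball x ε) : ∃ σ : Path x z, ∀ t, σ t ∈ ball x ε := by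
  have h1 : intrinsicEDist Set.univ x z < ENNReal.ofReal ε := by
    rw [← hY, edist_dist, dist_comm]
    have := mem_ball.1 h
    exact (ENNReal.ofReal_lt_ofReal_iff (lt_of_le_of_lt dist_nonneg this)).2 this
  unfold intrinsicEDist at h1
  simp only [iInf_lt_iff] at h1
  obtain ⟨σ, -, hσ⟩ := h1
  refine ⟨σ, fun t => ?_⟩
  have := (eVariationOn.edist_le (fun t => σ t) (mem_univ t) (mem_univ 0)).trans_lt hσ
  simp only [Path.source] at this
  rw [edist_dist] at this
  exact (ENNReal.ofReal_lt_ofReal_iff_of_nonneg dist_nonneg).1 this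

/-- Transport of fibres along a path. -/
noncomputable def fibTr {E X : Type*} [TopologicalSpace E] [TopologicalSpace X] {π : E → X}
    (hp : IsCoveringMapOnto π) {a b : X} (γ : Path a b) (e : π ⁻¹' {a}) : π ⁻¹' {b} :=
  hp.isCov.monodromy (Path.Homotopic.Quotient.mk γ) e

lemma fibTr_trans {E X : Type*} [TopologicalSpace E] [TopologicalSpace X] {π : E → X}
    (hp : IsCoveringMapOnto π) {a b c : X} (γ : Path a b) (σ : Path b c) (e : π ⁻¹' {a}) :
    fibTr hp (γ.trans σ) e = fibTr hp σ (fibTr hp γ e) := by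
  unfold fibTr
  rw [Path.Homotopic.Quotient.mk_trans, IsCoveringMap.monodromy_trans_apply]

lemma fibTr_symm {E X : Type*} [TopologicalSpace E] [TopologicalSpace X] {π : E → X}
    (hp : IsCoveringMapOnto π) {a b : X} (γ : Path a b) (e : π ⁻¹' {b}) :
    fibTr hp γ (fibTr hp γ.symm e) = e := by
  unfold fibTr
  rw [← IsCoveringMap.monodromy_trans_apply, Path.Homotopic.Quotient.mk_symm,
    Path.Homotopic.Quotient.symm_trans, IsCoveringMap.monodromy_refl]
  rfl

lemma fibTr_injective {E X : Type*} [TopologicalSpace E] [TopologicalSpace X] {π : E → X}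
    (hp : IsCoveringMapOnto π) {a b : X} (γ : Path a b) : Function.Injective (fibTr hp γ) :=
  (hp.isCov.monodromy_bijective _).1

lemma fibTr_lift {E X : Type*} [TopologicalSpace E] [TopologicalSpace X] {π : E → X}
    (hp : IsCoveringMapOnto π) {a b : X} (γ : Path a b) (e : π ⁻¹' {a}) (Γ : C(unitInterval, E))
    (hΓ : ∀ t, π (Γ t) = γ t) (h0 : Γ 0 = e) : (fibTr hp γ e : E) = Γ 1 := by
  have : Γ = hp.isCov.liftPath γ e (γ.source.trans e.2.symm) :=
    (hp.isCov.eq_liftPath_iff' _).2 ⟨funext hΓ, h0⟩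
  rw [this]
  rfl

lemma fibTr_exists_lift {E X : Type*} [TopologicalSpace E] [TopologicalSpace X] {π : E → X}
    (hp : IsCoveringMapOnto π) {a b : X} (γ : Path a b) (e : π ⁻¹' {a}) :
    ∃ Γ : C(unitInterval, E), (∀ t, π (Γ t) = γ t) ∧ Γ 0 = e ∧ Γ 1 = fibTr hp γ e := by
  obtain ⟨Γ, h1, h2⟩ := hp.isCov.exists_path_lifts γ e (γ.source.trans e.2.symm)
  exact ⟨Γ, congr_fun h1, h2, (fibTr_lift hp γ e Γ (congr_fun h1) h2).symm⟩

/-- Two paths are equivalent if they induce the same transport in every covering. -/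
def CEquiv {Y : Type*} [TopologicalSpace Y] {a b : Y} (γ γ' : Path a b) : Prop :=
  ∀ (E : Type) [TopologicalSpace E] (π : E → Y) (hp : IsCoveringMapOnto π) (e : π ⁻¹' {a}),
    fibTr hp γ e = fibTr hp γ' e

lemma exists_classes {Y : Type*} [MetricSpace Y] [SecondCountableTopology Y] (y : Y) :
    ∃ (E : Type) (p : E → Y) (cls : ∀ x, Path y x → E),
      (∀ e, ∃ γ : Path y (p e), cls (p e) γ = e) ∧ (∀ x γ, p (cls x γ) = x) ∧
      (∀ x γ γ', cls x γ = cls x γ' ↔ CEquiv γ γ') := by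
  let s : ∀ x, Setoid (Path y x) := fun x =>
    { r := CEquiv
      iseqv := ⟨fun γ E _ π hp e => rfl, fun h E _ π hp e => (h E π hp e).symm,
        fun h h' E _ π hp e => (h E π hp e).trans (h' E π hp e)⟩ }
  obtain ⟨k, hk⟩ := KuratowskiEmbedding.exists_isometric_embedding Y
  have hsm : Small.{0} (Σ x, Path y x) := by
    refine small_of_injective (β := unitInterval → _) (f := fun a t => k (a.2 t)) ?_
    rintro ⟨x, γ⟩ ⟨x', γ'⟩ h
    have h' : ∀ t, γ t = γ' t := fun t => hk.injective (congr_fun h t)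
    obtain rfl : x = x' := by simpa using h' 1
    obtain rfl : γ = γ' := by ext t; exact h' t
    rfl
  have hsm2 : Small.{0} (Σ x, Quotient (s x)) := by
    refine small_of_surjective (α := Σ x, Path y x) (f := fun a => ⟨a.1, Quotient.mk (s a.1) a.2⟩) ?_
    rintro ⟨x, q⟩
    obtain ⟨γ, rfl⟩ := Quotient.exists_rep q
    exact ⟨⟨x, γ⟩, rfl⟩
  refine ⟨Shrink.{0} (Σ x, Quotient (s x)), fun e => ((equivShrink _).symm e).1,
    fun x γ => equivShrink _ ⟨x, Quotient.mk (s x) γ⟩, ?_, ?_, ?_⟩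
  · intro e
    obtain ⟨γ, hγ⟩ := Quotient.exists_rep ((equivShrink (Σ x, Quotient (s x))).symm e).2
    refine ⟨γ, ?_⟩
    dsimp only
    rw [hγ]
    simp
  · intro x γ
    simp
  · intro x γ γ'
    rw [(equivShrink _).apply_eq_iff_eq]
    constructor
    · intro h
      have := eq_of_heq (Sigma.mk.inj h).2
      exact Quotient.exact this
    · intro h
      have : Quotient.mk (s x) γ = Quotient.mk (s x) γ' := Quotient.sound h
      rw [this]

/-- The topology on the space of classes of paths. -/
@[reducible] def clsTop {Y : Type*} [MetricSpace Y] {y : Y} {E : Type} (cls : ∀ x, Path y x → E) :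
    TopologicalSpace E where
  IsOpen O := ∀ x γ, cls x γ ∈ O → ∃ ε > 0, ∀ (x' : Y) (σ : Path x x'),
    (∀ t, σ t ∈ ball x ε) → cls x' (γ.trans σ) ∈ O
  isOpen_univ := fun _ _ _ => ⟨1, one_pos, fun _ _ _ => trivial⟩
  isOpen_inter := by
    intro O O' h h' x γ hm
    obtain ⟨ε, hε, H⟩ := h x γ hm.1
    obtain ⟨ε', hε', H'⟩ := h' x γ hm.2
    exact ⟨min ε ε', by positivity, fun x' σ hσ =>
      ⟨H x' σ fun t => ball_subset_ball (min_le_left _ _) (hσ t),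
        H' x' σ fun t => ball_subset_ball (min_le_right _ _) (hσ t)⟩⟩
  isOpen_sUnion := by
    intro S hS x γ hm
    obtain ⟨O, hO, hm⟩ := hm
    obtain ⟨ε, hε, H⟩ := hS O hO x γ hm
    exact ⟨ε, hε, fun x' σ hσ => ⟨O, hO, H x' σ hσ⟩⟩

lemma exists_univ_cover {Y : Type*} [MetricSpace Y] [SecondCountableTopology Y]
    (hY : IsLengthSpace Y) (y : Y)
    (hsmall : ∀ x : Y, ∃ ρ > 0, ∀ γ : C(unitInterval, Y), γ 0 = γ 1 → (∀ t, γ t ∈ ball x ρ) →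
      ∀ (E : Type) [TopologicalSpace E] (π : E → Y), IsCoveringMapOnto π → LiftsClosed π γ) :
    ∃ (E : Type) (i : TopologicalSpace E) (π : E → Y), @IsUniversalCover E Y i _ π := by
  obtain ⟨E, p, cls, hrep, hpc, hcls⟩ := exists_classes y
  let τ : TopologicalSpace E := clsTop cls
  have hopen : ∀ O : Set E, IsOpen O ↔ ∀ x γ, cls x γ ∈ O → ∃ ε > 0, ∀ (x' : Y) (σ : Path x x'),
    (∀ t, σ t ∈ ball x ε) → cls x' (γ.trans σ) ∈ O := fun O => Iff.rfl
  have hrep' : ∀ e, ∃ x γ, cls x γ = e := fun e => ⟨_, hrep e⟩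
  have hpcont : Continuous p := by
    refine continuous_def.2 fun V hV => (hopen _).2 fun x γ hm => ?_
    rw [mem_preimage, hpc] at hm
    obtain ⟨ε, hε, hb⟩ := Metric.isOpen_iff.1 hV x hm
    refine ⟨ε, hε, fun x' σ hσ => ?_⟩
    rw [mem_preimage, hpc]
    simpa using hb (hσ 1)
  refine ⟨E, τ, p, ⟨?_, ?_⟩, ?_⟩
  · -- surjectivity
    intro x
    obtain ⟨σ, -⟩ := exists_path_ball hY (x := y) (z := x) (ε := dist x y + 1)
      (by rw [mem_ball]; linarith)
    exact ⟨cls x σ, hpc _ _⟩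
  · -- evenly covered
    intro c
    obtain ⟨ρ, hρ, hgood⟩ := hsmall c
    have G : ∀ (a b : Y) (σ σ' : Path a b), (∀ t, σ t ∈ ball c ρ) → (∀ t, σ' t ∈ ball c ρ) →
        CEquiv σ σ' := by
      intro a b σ σ' hσ hσ' E' _ π hp e
      have key : fibTr hp (σ.trans σ'.symm) e = e := by
        obtain ⟨Γ, h1, h2, h3⟩ := fibTr_exists_lift hp (σ.trans σ'.symm) e
        have := hgood (σ.trans σ'.symm).toContinuousMap (by simp) (fun t => ?_) E' π hp Γ h1
        · exact Subtype.ext (by rw [← h3, ← this, h2])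
        · have : (σ.trans σ'.symm) t ∈ Set.range σ ∪ Set.range σ'.symm := by
            rw [← Path.trans_range]; exact mem_range_self t
          rcases this with ⟨u, hu⟩ | ⟨u, hu⟩
          · exact hu ▸ hσ u
          · exact hu ▸ hσ' _
      rw [fibTr_trans] at key
      have := fibTr_symm hp σ' (fibTr hp σ e)
      rw [key] at this
      exact this.symm
    have hst : ∀ x : ball c ρ, ∃ σ : Path c x, ∀ t, σ t ∈ ball c ρ := fun x =>
      exists_path_ball hY x.2
    choose σ hσ using hst
    have hι : ∀ e : {e : E // p e = c}, ∃ γ : Path y c, cls c γ = e := by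
      rintro ⟨e, rfl⟩
      exact hrep e
    choose g hg using hι
    let s : {e : E // p e = c} → ball c ρ → E := fun e x => cls x ((g e).trans (σ x))
    have hs : ∀ e (x : ball c ρ) (σ' : Path c x), (∀ t, σ' t ∈ ball c ρ) →
        cls x ((g e).trans σ') = s e x := by
      intro e x σ' hσ'
      refine (hcls _ _ _).2 fun E' _ π hp f => ?_
      rw [fibTr_trans, fibTr_trans]
      exact G _ _ _ _ hσ' (hσ x) E' π hp _
    have htr : ∀ {a b d : Y} {γ : Path a b} {σ : Path b d} {S : Set Y}, (∀ t, γ t ∈ S) →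
        (∀ t, σ t ∈ S) → ∀ t, γ.trans σ t ∈ S := by
      intro a b d γ σ S h h' t
      have : (γ.trans σ) t ∈ Set.range γ ∪ Set.range σ := by
        rw [← Path.trans_range]; exact mem_range_self t
      rcases this with ⟨u, hu⟩ | ⟨u, hu⟩
      · exact hu ▸ h u
      · exact hu ▸ h' u
    have hext : ∀ e (x x' : ball c ρ) (γ : Path y x) (σ' : Path (x : Y) x'), cls x γ = s e x →
        (∀ t, σ' t ∈ ball c ρ) → cls x' (γ.trans σ') = s e x' := by
      intro e x x' γ σ' h hσ'
      rw [← hs e x' ((σ x).trans σ') (htr (hσ x) hσ')]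
      refine (hcls _ _ _).2 fun E' _ π hp f => ?_
      have := (hcls _ _ _).1 h E' π hp f
      rw [fibTr_trans, this]
      simp only [fibTr_trans]
    have hps : ∀ e (x : ball c ρ), p (s e x) = x := fun e x => hpc _ _
    refine ⟨ball c ρ, isOpen_ball, mem_ball_self hρ,
      evenlyCovered_mk hpcont {e : E // p e = c} (fun e => range (s e)) ?_ ?_ ?_ s ?_ ?_ hps ?_⟩
    · intro e
      refine (hopen _).2 fun x γ hm => ?_
      obtain ⟨x₁, hx₁⟩ := hm
      obtain rfl : (x₁ : Y) = x := by rw [← hps e x₁, hx₁, hpc]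
      obtain ⟨ε, hε, hb⟩ := Metric.isOpen_iff.1 isOpen_ball (x₁ : Y) x₁.2
      refine ⟨ε, hε, fun x' σ' hσ' => ?_⟩
      have hx' : x' ∈ ball c ρ := by simpa using hb (hσ' 1)
      exact ⟨⟨x', hx'⟩, (hext e x₁ ⟨x', hx'⟩ γ σ' hx₁.symm fun t => hb (hσ' t)).symm⟩
    · rintro e e' w ⟨x, rfl⟩ ⟨x', hx'⟩
      obtain rfl : x' = x := Subtype.ext (by rw [← hps e' x', hx', hps])
      apply Subtype.ext
      rw [← hg, ← hg]
      refine (hcls _ _ _).2 fun E' _ π hp f => ?_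
      have := (hcls _ _ _).1 hx' E' π hp f
      rw [fibTr_trans, fibTr_trans] at this
      exact (fibTr_injective hp _ this).symm
    · ext w
      rw [mem_iUnion]
      constructor
      · intro hw
        obtain ⟨x, γ, rfl⟩ := hrep' w
        rw [mem_preimage, hpc] at hw
        let e : {e : E // p e = c} := ⟨cls c (γ.trans (σ ⟨x, hw⟩).symm), hpc _ _⟩
        refine ⟨e, ⟨x, hw⟩, ?_⟩
        refine (hcls _ _ _).2 fun E' _ π hp f => ?_
        have := (hcls _ _ _).1 (hg e) E' π hp f
        rw [fibTr_trans, this, fibTr_trans, fibTr_symm]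
      · rintro ⟨e, x, rfl⟩
        rw [mem_preimage, hps]
        exact x.2
    · intro e
      refine continuous_def.2 fun O hO => ?_
      rw [Metric.isOpen_iff]
      intro x hx
      obtain ⟨ε, hε, H⟩ := (hopen O).1 hO x _ hx
      obtain ⟨ε', hε', hb⟩ := Metric.isOpen_iff.1 isOpen_ball (x : Y) x.2
      refine ⟨min ε ε', by positivity, fun x' hx' => ?_⟩
      obtain ⟨σ', hσ'⟩ := exists_path_ball hY (x := (x : Y)) (z := x') hx'
      have := H x' σ' fun t => ball_subset_ball (min_le_left _ _) (hσ' t)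
      rw [hext e x x' _ σ' rfl fun t => hb (ball_subset_ball (min_le_right _ _) (hσ' t))] at this
      exact this
    · intro e x
      exact mem_range_self x
    · rintro e w ⟨x, rfl⟩ hv
      congr 1
      exact Subtype.ext (hps e x)
  · -- universality
    intro E' _ π' hp
    obtain ⟨e₀, he₀⟩ := hp.1 y
    choose rep hrep using hrep
    let f : E → E' := fun e => fibTr hp (rep e) ⟨e₀, he₀⟩
    have hf : ∀ x γ, f (cls x γ) = fibTr hp γ ⟨e₀, he₀⟩ := by
      have : ∀ e x γ, cls x γ = e → f e = fibTr hp γ ⟨e₀, he₀⟩ := by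
        intro e x γ h
        have hx : p e = x := by rw [← h, hpc]
        subst hx
        have := (hcls _ _ _).1 ((hrep e).trans h.symm) E' π' hp ⟨e₀, he₀⟩
        exact congrArg Subtype.val this
      exact fun x γ => this _ _ _ rfl
    refine ⟨f, ?_, ?_⟩
    · refine continuous_def.2 fun O hO => (hopen _).2 fun x γ hm => ?_
      rw [mem_preimage, hf] at hm
      set e₁ := fibTr hp γ ⟨e₀, he₀⟩ with he₁
      obtain ⟨φ, hφ, hφp⟩ := hp.isCov.isLocalHomeomorph (e₁ : E')
      have hN : IsOpen (φ.source ∩ O) := φ.open_source.inter hO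
      have hI : IsOpen (π' '' (φ.source ∩ O)) := hp.isCov.isOpenMap _ hN
      obtain ⟨ε, hε, hb⟩ := Metric.isOpen_iff.1 hI x ⟨e₁, ⟨hφ, hm⟩, e₁.2⟩
      refine ⟨ε, hε, fun x' σ hσ => ?_⟩
      rw [mem_preimage, hf, fibTr_trans]
      have hφσ : ∀ t, ∃ w ∈ φ.source ∩ O, φ w = σ t := fun t => by
        obtain ⟨w, hw, h⟩ := hb (hσ t)
        exact ⟨w, hw, by rw [← hφp]; exact h⟩
      have htgt : ∀ t, σ t ∈ φ.target := fun t => by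
        obtain ⟨w, hw, h⟩ := hφσ t
        rw [← h]; exact φ.map_source hw.1
      have hO' : ∀ t, φ.symm (σ t) ∈ O := fun t => by
        obtain ⟨w, hw, h⟩ := hφσ t
        rw [← h, φ.left_inv hw.1]; exact hw.2
      let Γ : C(unitInterval, E') := ⟨fun t => φ.symm (σ t),
        φ.continuousOn_symm.comp_continuous σ.continuous htgt⟩
      have := fibTr_lift hp σ e₁ Γ (fun t => by
        show π' (φ.symm (σ t)) = σ t
        rw [hφp]; exact φ.right_inv (htgt t)) (by
        show φ.symm (σ 0) = e₁
        have h1 : π' (e₁ : E') = x := e₁.2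
        rw [σ.source, ← φ.left_inv hφ, ← hφp, h1])
      rw [this]
      exact hO' 1
    · funext e
      exact (fibTr hp (rep e) ⟨e₀, he₀⟩).2

end Helpers

/-- If a (proper) length space `Y` has a point `y` such that for every
`r > 0` there is `R ≥ r` for which the relative `δ`-covers `B̃(y,r,R)^δ` stabilize for
all sufficiently small `δ` (the same cover is the relative `δ`-cover for all
`0 < δ < δ₀`), then `Y` has a universal cover. -/
theorem universalCover_exists_of_relDeltaCover_stabilization
    {Y : Type*} [MetricSpace Y] (hY : IsLengthSpace Y) [ProperSpace Y]
    (y : Y)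
    (hstab : ∀ r > 0, ∃ R ≥ r, ∃ δ₀ > 0, ∃ C : SetCover (Metric.closedBall y r),
      IsRelDeltaCover y r R δ₀ C ∧ ∀ δ, 0 < δ → δ < δ₀ → IsRelDeltaCover y r R δ C) :
    ∃ (E : Type) (i : TopologicalSpace E) (π : E → Y), @IsUniversalCover E Y i _ π := by
  exact exists_univ_cover hY y (small_loops y hstab)
end

section
/- The following two definitions of pointed Gromov-Hausdorff convergence of complete length spaces (M_i, p_i) to (Y, y) are equivalent: (Definition A) for all R > 0, the closed balls (B(p_i,R), d_{M_i}) with restricted metrics converge in Gromov-Hausdorff distance to (B(y,R), d_Y); (Definition B) for all R > 0, there exist R_i → R such that the closed balls (B(p_i,R_i)) with their intrinsic (induced length) metrics converge in Gromov-Hausdorff distance to (B(y,R)) with its intrinsic metric. -/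
open Metric Set

/-- An `ε`-Hausdorff approximation from `A ⊆ X` to `B ⊆ Y` with respect to the restricted
(ambient) metrics. -/
def RestrictedHA {X Y : Type*} [MetricSpace X] [MetricSpace Y] (ε : ℝ)
    (A : Set X) (B : Set Y) (f : X → Y) : Prop :=
  Set.MapsTo f A B ∧ (∀ b ∈ B, ∃ a ∈ A, dist (f a) b ≤ ε) ∧
    ∀ a₁ ∈ A, ∀ a₂ ∈ A, |dist (f a₁) (f a₂) - dist a₁ a₂| ≤ ε

/-- An `ε`-Hausdorff approximation from `A ⊆ X` to `B ⊆ Y` with respect to the intrinsic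
(induced length) metrics of `A` and `B`. -/
def IntrinsicHA {X Y : Type*} [MetricSpace X] [MetricSpace Y] (ε : ℝ)
    (A : Set X) (B : Set Y) (f : X → Y) : Prop :=
  Set.MapsTo f A B ∧ (∀ b ∈ B, ∃ a ∈ A, intrinsicEDist B (f a) b ≤ ENNReal.ofReal ε) ∧
    ∀ a₁ ∈ A, ∀ a₂ ∈ A,
      intrinsicEDist A a₁ a₂ ≤ intrinsicEDist B (f a₁) (f a₂) + ENNReal.ofReal ε ∧
      intrinsicEDist B (f a₁) (f a₂) ≤ intrinsicEDist A a₁ a₂ + ENNReal.ofReal ε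

/-- A bundled pointed metric space. -/
structure PointedMetricSpace where
  carrier : Type
  inst : MetricSpace carrier
  pt : carrier

attribute [instance] PointedMetricSpace.inst

/-- Pointed Gromov-Hausdorff convergence: for every radius `R` and every `ε > 0`,
eventually there are pointed `ε`-Hausdorff approximations between the closed `R`-balls
around the basepoints, with respect to the restricted metrics. -/
def ConvergesPGH (X : ℕ → PointedMetricSpace) (Y : PointedMetricSpace) : Prop :=
  ∀ R > 0, ∀ ε > 0, ∃ N : ℕ, ∀ i ≥ N, ∃ f : (X i).carrier → Y.carrier,
    f (X i).pt = Y.pt ∧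
    RestrictedHA ε (Metric.closedBall (X i).pt R) (Metric.closedBall Y.pt R) f

/-- Pointed Gromov–Hausdorff convergence via balls with intrinsic metrics: for every
`R > 0` there are radii `R_i → R` such that the closed balls `B(p_i,R_i)` with their
intrinsic metrics converge to `B(y,R)` with its intrinsic metric. -/
def ConvergesPGHIntrinsic (X : ℕ → PointedMetricSpace) (Y : PointedMetricSpace) : Prop :=
  ∀ R > 0, ∃ Ri : ℕ → ℝ, Filter.Tendsto Ri Filter.atTop (nhds R) ∧
    ∀ ε > 0, ∃ N : ℕ, ∀ i ≥ N, ∃ f : (X i).carrier → Y.carrier,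
      f (X i).pt = Y.pt ∧
      IntrinsicHA ε (Metric.closedBall (X i).pt (Ri i)) (Metric.closedBall Y.pt R) f

open Filter Topology

/-! ### Basic properties of the intrinsic distance -/

lemma intr_le_path {X : Type*} [PseudoMetricSpace X] {A : Set X} {x y : X} (γ : Path x y)
    (h : ∀ t, γ t ∈ A) : intrinsicEDist A x y ≤ pathLength γ :=
  iInf₂_le γ (by rintro _ ⟨t, rfl⟩; exact h t)

lemma intr_lt_iff {X : Type*} [PseudoMetricSpace X] {A : Set X} {x y : X} {c : ENNReal} :
    intrinsicEDist A x y < c ↔ ∃ γ : Path x y, (∀ t, γ t ∈ A) ∧ pathLength γ < c := by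
  unfold intrinsicEDist
  simp only [iInf_lt_iff, exists_prop, range_subset_iff]

lemma edist_le_intr {X : Type*} [PseudoMetricSpace X] (A : Set X) (x y : X) :
    edist x y ≤ intrinsicEDist A x y := by
  refine le_iInf₂ fun γ _ => ?_
  have := eVariationOn.edist_le (fun t => γ t) (s := univ) (x := 0) (y := 1) trivial trivial
  simpa [pathLength] using this

lemma intr_mono {X : Type*} [PseudoMetricSpace X] {A B : Set X} (h : A ⊆ B) (x y : X) :
    intrinsicEDist B x y ≤ intrinsicEDist A x y :=
  le_iInf₂ fun γ hγ => iInf₂_le γ (hγ.trans h)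

lemma intr_comm_le {X : Type*} [PseudoMetricSpace X] (A : Set X) (x y : X) :
    intrinsicEDist A y x ≤ intrinsicEDist A x y := by
  refine le_iInf₂ fun γ hγ => ?_
  refine (intr_le_path γ.symm fun t => hγ ⟨unitInterval.symm t, rfl⟩).trans ?_
  refine eVariationOn.comp_le_of_antitoneOn (fun t => γ t) unitInterval.symm ?_
    (fun _ _ => trivial)
  intro a _ b _ h
  simpa using h

lemma intr_comm {X : Type*} [PseudoMetricSpace X] (A : Set X) (x y : X) :
    intrinsicEDist A y x = intrinsicEDist A x y :=
  le_antisymm (intr_comm_le A x y) (intr_comm_le A y x)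

lemma pathLength_trans_le {X : Type*} [PseudoMetricSpace X] {x y z : X} (γ : Path x y)
    (γ' : Path y z) : pathLength (γ.trans γ') ≤ pathLength γ + pathLength γ' := by
  let m : unitInterval := ⟨1 / 2, by norm_num, by norm_num⟩
  have hU : (univ : Set unitInterval) = Iic m ∪ Ici m := by
    ext t; simp
  unfold pathLength
  have e := eVariationOn.union (fun t => (γ.trans γ') t) (isGreatest_Iic (a := m)) isLeast_Ici
  rw [← hU] at e
  rw [e]
  refine add_le_add ?_ ?_
  · have h1 : EqOn (fun t => (γ.trans γ') t)
        ((fun t => γ t) ∘ fun t : unitInterval => projIcc (0 : ℝ) 1 zero_le_one (2 * t)) (Iic m) := by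
      intro t ht
      have ht' : (t : ℝ) ≤ 1 / 2 := ht
      simp only [Path.trans, Path.coe_mk_mk, Function.comp_apply, ht', if_true]
      rfl
    rw [eVariationOn.congr h1]
    refine eVariationOn.comp_le_of_monotoneOn _ _ ?_ (fun _ _ => trivial)
    intro a _ b _ hab
    apply monotone_projIcc
    have : (a : ℝ) ≤ b := hab
    linarith
  · have h1 : EqOn (fun t => (γ.trans γ') t)
        ((fun t => γ' t) ∘ fun t : unitInterval => projIcc (0 : ℝ) 1 zero_le_one (2 * t - 1))
          (Ici m) := by
      intro t ht
      have ht' : 1 / 2 ≤ (t : ℝ) := ht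
      rcases ht'.eq_or_lt with h | h
      · have : t = m := Subtype.ext h.symm
        subst this
        simp [Path.trans, m]
      · simp only [Path.trans, Path.coe_mk_mk, Function.comp_apply, not_le.2 h, if_false]
        rfl
    rw [eVariationOn.congr h1]
    refine eVariationOn.comp_le_of_monotoneOn _ _ ?_ (fun _ _ => trivial)
    intro a _ b _ hab
    apply monotone_projIcc
    have : (a : ℝ) ≤ b := hab
    linarith

lemma intr_triangle {X : Type*} [PseudoMetricSpace X] (A : Set X) (x y z : X) :
    intrinsicEDist A x z ≤ intrinsicEDist A x y + intrinsicEDist A y z := by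
  by_contra! h
  have h1 : intrinsicEDist A x y ≠ ⊤ := by
    rintro e; simp [e] at h
  have h2 : intrinsicEDist A y z ≠ ⊤ := by
    rintro e; simp [e] at h
  obtain ⟨c, hc1, hc2⟩ := exists_between h
  have hcpos : 0 < c - (intrinsicEDist A x y + intrinsicEDist A y z) := tsub_pos_of_lt hc1
  set d := c - (intrinsicEDist A x y + intrinsicEDist A y z) with hd
  have hd2 : d / 2 ≠ 0 := (ENNReal.half_pos hcpos.ne').ne'
  obtain ⟨γ, hγ, hγl⟩ := intr_lt_iff.1 (ENNReal.lt_add_right h1 hd2)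
  obtain ⟨γ', hγ', hγl'⟩ := intr_lt_iff.1 (ENNReal.lt_add_right h2 hd2)
  have h3 : intrinsicEDist A x z ≤ pathLength (γ.trans γ') := by
    apply intr_le_path
    intro t
    rw [Path.trans_apply]
    split_ifs
    · exact hγ _
    · exact hγ' _
  have h4 := h3.trans ((pathLength_trans_le γ γ').trans (add_le_add hγl.le hγl'.le))
  have h5 : intrinsicEDist A x y + d / 2 + (intrinsicEDist A y z + d / 2) = c := by
    calc _ = intrinsicEDist A x y + intrinsicEDist A y z + (d / 2 + d / 2) := by ring
      _ = c := by rw [ENNReal.add_halves, hd, add_tsub_cancel_of_le hc1.le]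
  rw [h5] at h4
  exact absurd h4 (not_le.2 hc2)

lemma intr_tri {X : Type*} [PseudoMetricSpace X] {A : Set X} {x y z : X} {a b : ℝ}
    (ha : 0 ≤ a) (hb : 0 ≤ b) (h1 : intrinsicEDist A x y ≤ ENNReal.ofReal a)
    (h2 : intrinsicEDist A y z ≤ ENNReal.ofReal b) :
    intrinsicEDist A x z ≤ ENNReal.ofReal (a + b) := by
  rw [ENNReal.ofReal_add ha hb]
  exact (intr_triangle A x y z).trans (add_le_add h1 h2)

lemma dist_le_of_intr {X : Type*} [PseudoMetricSpace X] {A : Set X} {x y : X} {a : ℝ}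
    (ha : 0 ≤ a) (h1 : intrinsicEDist A x y ≤ ENNReal.ofReal a) : dist x y ≤ a := by
  have := (edist_le_intr A x y).trans h1
  rw [edist_dist] at this
  exact (ENNReal.ofReal_le_ofReal_iff ha).1 this

/-- A Lipschitz curve bounds the intrinsic distance. -/
lemma intr_le_of_lip {X : Type*} [PseudoMetricSpace X] {A : Set X} {K : ℝ} (hK : 0 ≤ K)
    (γ : ℝ → X) (hγ : ∀ s ∈ Icc (0 : ℝ) 1, ∀ t ∈ Icc (0 : ℝ) 1, dist (γ s) (γ t) ≤ K * |s - t|)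
    (hA : ∀ t ∈ Icc (0 : ℝ) 1, γ t ∈ A) :
    intrinsicEDist A (γ 0) (γ 1) ≤ ENNReal.ofReal K := by
  have hL : LipschitzOnWith K.toNNReal γ (Icc 0 1) := by
    apply LipschitzOnWith.of_dist_le_mul
    intro s hs t ht
    rw [Real.coe_toNNReal _ hK, Real.dist_eq]
    exact hγ s hs t ht
  have hc : Continuous (fun t : unitInterval => γ t) :=
    continuousOn_iff_continuous_domRestrict.1 hL.continuousOn
  let P : Path (γ 0) (γ 1) := ⟨⟨fun t => γ t, hc⟩, by simp, by simp⟩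
  refine (intr_le_path P fun t => hA t t.2).trans ?_
  have h1 : pathLength P ≤ K.toNNReal * eVariationOn (fun t : unitInterval => (t : ℝ)) univ :=
    hL.comp_eVariationOn_le (g := fun t : unitInterval => (t : ℝ)) (s := univ) (fun t _ => t.2)
  have hm : MonotoneOn (fun t : unitInterval => (t : ℝ)) univ := fun a _ b _ h => h
  have h2 := hm.eVariationOn_eq (a := 0) (b := 1) trivial trivial
  have h3 : (univ : Set unitInterval) ∩ Icc 0 1 = univ := by
    ext t; exact ⟨fun _ => trivial, fun _ => ⟨trivial, t.2.1, t.2.2⟩⟩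
  rw [h3] at h2
  refine h1.trans ?_
  calc _ ≤ (K.toNNReal : ENNReal) * 1 := by
        gcongr
        simp [h2]
    _ = ENNReal.ofReal K := by simp [ENNReal.ofReal]

/-- Discretization of a path into `n` steps of size at most `L / n`. -/
lemma exists_chain {X : Type*} [PseudoMetricSpace X] {A : Set X} {x z : X} {L : ℝ} (hL : 0 ≤ L)
    (h : intrinsicEDist A x z < ENNReal.ofReal L) {n : ℕ} (hn : 1 ≤ n) :
    ∃ u : ℕ → X, u 0 = x ∧ u n = z ∧ (∀ k, u k ∈ A) ∧
      ∀ k, dist (u k) (u (k + 1)) ≤ L / n := by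
  obtain ⟨γ, hγA, hγ⟩ := intr_lt_iff.1 h
  have hn0 : (0 : ℝ) < n := by exact_mod_cast hn
  set η := L / n with hη
  have hη0 : 0 ≤ η := by positivity
  have key : ∀ t : unitInterval, ∃ t', t ≤ t' ∧ dist (γ t) (γ t') ≤ η ∧
      (t' = 1 ∨ η ≤ dist (γ t) (γ t')) := by
    intro t
    have hcl : IsCompact {t' : unitInterval | t ≤ t' ∧ dist (γ t) (γ t') ≤ η} := by
      apply IsClosed.isCompact
      apply IsClosed.inter
      · exact isClosed_Ici
      · have hcont : Continuous fun s => dist (γ t) (γ s) := by fun_prop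
        exact isClosed_le hcont continuous_const
    obtain ⟨m, ⟨hm1, hm2⟩, hm3⟩ := hcl.exists_isGreatest ⟨t, le_rfl, by simpa using hη0⟩
    refine ⟨m, hm1, hm2, ?_⟩
    by_contra! hcon
    obtain ⟨hne, hlt⟩ := hcon
    have hm1' : m < 1 := lt_of_le_of_ne m.2.2 hne
    have hev : ∀ᶠ s in 𝓝 m, dist (γ t) (γ s) < η := by
      have : Continuous fun s => dist (γ t) (γ s) := by fun_prop
      exact this.continuousAt.eventually (gt_mem_nhds hlt)
    have hnb : (𝓝[>] m).NeBot := nhdsGT_neBot_of_exists_gt ⟨1, hm1'⟩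
    have hgt : ∀ᶠ s in 𝓝[>] m, m < s := self_mem_nhdsWithin
    have hev' : ∀ᶠ s in 𝓝[>] m, dist (γ t) (γ s) < η := nhdsWithin_le_nhds hev
    obtain ⟨s, hs1, hs2⟩ := (hev'.and hgt).exists
    exact absurd (hm3 ⟨hm1.trans hs2.le, hs1.le⟩) (not_le.2 hs2)
  choose T hT1 hT2 hT3 using key
  let w : ℕ → unitInterval := fun k => T^[k] 0
  have hw : ∀ k, w (k + 1) = T (w k) := fun k => Function.iterate_succ_apply' T k 0
  have hmono : Monotone w := monotone_nat_of_le_succ fun k => by rw [hw]; exact hT1 _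
  have hend : w n = 1 := by
    by_contra hne
    have hsum := eVariationOn.sum_le (f := fun t => γ t) (s := univ) (n := n) hmono
      (fun _ => trivial)
    have hge : ∀ k ∈ Finset.range n, ENNReal.ofReal η ≤ edist (γ (w (k + 1))) (γ (w k)) := by
      intro k hk
      rw [Finset.mem_range] at hk
      rw [edist_comm, edist_dist, hw]
      apply ENNReal.ofReal_le_ofReal
      rcases hT3 (w k) with h1 | h1
      · exfalso
        apply hne
        have h2 : w (k + 1) ≤ w n := hmono hk
        rw [hw, h1] at h2
        exact le_antisymm (w n).2.2 h2
      · exact h1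
    have h2 := (Finset.sum_le_sum hge).trans hsum
    rw [Finset.sum_const, Finset.card_range, nsmul_eq_mul, ← ENNReal.ofReal_natCast,
      ← ENNReal.ofReal_mul hn0.le, hη, mul_div_cancel₀ _ hn0.ne'] at h2
    exact absurd hγ (not_lt.2 h2)
  refine ⟨fun k => γ (w k), by simp [w], by simp [hend], fun k => hγA _, fun k => ?_⟩
  simp only [hw]
  exact hT2 _

/-! ### Limits of chains along an ultrafilter -/

lemma ultra_lim {X ι : Type*} [TopologicalSpace X] (U : Ultrafilter ι) {K : Set X}
    (hK : IsCompact K) {v : ι → X} (h : ∀ᶠ n in (U : Filter ι), v n ∈ K) :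
    ∃ x ∈ K, Tendsto v U (𝓝 x) := by
  obtain ⟨x, hx, hle⟩ := hK.ultrafilter_le_nhds (U.map v) (by
    rw [le_principal_iff]; exact h)
  exact ⟨x, hx, hle⟩

lemma chain_dist {X : Type*} [PseudoMetricSpace X] {u : ℕ → X} {s : ℝ} {n : ℕ}
    (h : ∀ k < n, dist (u k) (u (k + 1)) ≤ s) {j k : ℕ} (hjk : j ≤ k) (hk : k ≤ n) :
    dist (u j) (u k) ≤ ((k : ℝ) - j) * s := by
  have := dist_le_Ico_sum_of_dist_le (f := u) hjk (d := fun _ => s)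
    (fun {i} _ hi => h i (hi.trans_le hk))
  simpa [Nat.cast_sub hjk] using this

lemma chain_limit {X : Type*} [MetricSpace X] [ProperSpace X] (U : Ultrafilter ℕ)
    (hU : (U : Filter ℕ) ≤ atTop) (p : X) (u : ℕ → ℕ → X) (c r : ℕ → ℝ) {L R : ℝ} {x z : X}
    (hc0 : ∀ᶠ n in (U : Filter ℕ), 0 ≤ c n)
    (hstep : ∀ᶠ n in (U : Filter ℕ), ∀ k < n, dist (u n k) (u n (k + 1)) ≤ c n / n)
    (hball : ∀ᶠ n in (U : Filter ℕ), ∀ k ≤ n, u n k ∈ closedBall p (r n))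
    (hc : Tendsto c U (𝓝 L)) (hr : Tendsto r U (𝓝 R))
    (hx : Tendsto (fun n => u n 0) U (𝓝 x)) (hz : Tendsto (fun n => u n n) U (𝓝 z)) :
    ∃ γ : ℝ → X, γ 0 = x ∧ γ 1 = z ∧
      (∀ s ∈ Icc (0 : ℝ) 1, ∀ t ∈ Icc (0 : ℝ) 1, dist (γ s) (γ t) ≤ L * |s - t|) ∧
      ∀ t ∈ Icc (0 : ℝ) 1, γ t ∈ closedBall p R := by
  have hfl : ∀ t ∈ Icc (0 : ℝ) 1, ∀ n : ℕ, ⌊(n : ℝ) * t⌋₊ ≤ n := by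
    intro t ht n
    apply Nat.floor_le_of_le
    have : (0 : ℝ) ≤ n := Nat.cast_nonneg n
    nlinarith [ht.1, ht.2]
  have hrR : ∀ᶠ n in (U : Filter ℕ), r n ≤ R + 1 :=
    hr.eventually (eventually_le_nhds (by linarith))
  have hex : ∀ t : ℝ, ∃ g : X, t ∈ Icc (0 : ℝ) 1 →
      Tendsto (fun n : ℕ => u n ⌊(n : ℝ) * t⌋₊) U (𝓝 g) := by
    intro t
    by_cases ht : t ∈ Icc (0 : ℝ) 1
    · obtain ⟨g, -, hg⟩ := ultra_lim U (isCompact_closedBall p (R + 1))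
        (v := fun n : ℕ => u n ⌊(n : ℝ) * t⌋₊) (by
          filter_upwards [hball, hrR] with n h1 h2
          exact closedBall_subset_closedBall h2 (h1 _ (hfl t ht n)))
      exact ⟨g, fun _ => hg⟩
    · exact ⟨p, fun h => absurd h ht⟩
  choose γ hγ using hex
  have hle : ∀ s ∈ Icc (0 : ℝ) 1, ∀ t ∈ Icc (0 : ℝ) 1, s ≤ t →
      dist (γ s) (γ t) ≤ L * (t - s) := by
    intro s hs t ht hst
    have h1 : Tendsto (fun n : ℕ => dist (u n ⌊(n : ℝ) * s⌋₊) (u n ⌊(n : ℝ) * t⌋₊)) U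
        (𝓝 (dist (γ s) (γ t))) := (hγ s hs).dist (hγ t ht)
    have h2 : Tendsto (fun n : ℕ => c n * (t - s) + c n * (1 / (n : ℝ))) U
        (𝓝 (L * (t - s) + L * 0)) :=
      (hc.mul_const _).add (hc.mul (tendsto_one_div_atTop_nhds_zero_nat.mono_left hU))
    rw [mul_zero, add_zero] at h2
    refine le_of_tendsto_of_tendsto h1 h2 ?_
    filter_upwards [hc0, hstep, hU (eventually_ge_atTop 1)] with n h0 hs' hn
    have hn0 : (0 : ℝ) < n := by exact_mod_cast hn
    have hfloor : ⌊(n : ℝ) * s⌋₊ ≤ ⌊(n : ℝ) * t⌋₊ :=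
      Nat.floor_mono (mul_le_mul_of_nonneg_left hst hn0.le)
    refine (chain_dist hs' hfloor (hfl t ht n)).trans ?_
    have e1 : ((⌊(n : ℝ) * t⌋₊ : ℕ) : ℝ) ≤ n * t := Nat.floor_le (mul_nonneg hn0.le ht.1)
    have e2 : (n : ℝ) * s < (⌊(n : ℝ) * s⌋₊ : ℕ) + 1 := Nat.lt_floor_add_one _
    calc _ ≤ ((n : ℝ) * (t - s) + 1) * (c n / n) := by
          apply mul_le_mul_of_nonneg_right _ (by positivity)
          linarith
      _ = _ := by field_simp
  refine ⟨γ, ?_, ?_, ?_, ?_⟩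
  · refine tendsto_nhds_unique (hγ 0 (by simp)) ?_
    simpa using hx
  · refine tendsto_nhds_unique (hγ 1 (by simp)) ?_
    simpa using hz
  · intro s hs t ht
    rcases le_total s t with h | h
    · rw [abs_sub_comm, abs_of_nonneg (by linarith)]
      exact hle s hs t ht h
    · rw [abs_of_nonneg (by linarith), dist_comm]
      exact hle t ht s hs h
  · intro t ht
    refine le_of_tendsto_of_tendsto ((hγ t ht).dist tendsto_const_nhds) hr ?_
    filter_upwards [hball] with n h1
    exact h1 _ (hfl t ht n)

/-! ### Geodesics in proper length spaces -/

lemma exists_geod {X : Type*} [MetricSpace X] [ProperSpace X] (hX : IsLengthSpace X) (x z : X) :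
    ∃ γ : ℝ → X, γ 0 = x ∧ γ 1 = z ∧
      ∀ s ∈ Icc (0 : ℝ) 1, ∀ t ∈ Icc (0 : ℝ) 1, dist (γ s) (γ t) ≤ dist x z * |s - t| := by
  set L : ℕ → ℝ := fun n => dist x z + 1 / ((n : ℝ) + 1) with hLdef
  have hL0 : ∀ n, 0 ≤ L n := fun n => by simp only [hLdef]; positivity
  have hch : ∀ n : ℕ, 1 ≤ n → ∃ u : ℕ → X, u 0 = x ∧ u n = z ∧
      ∀ k, dist (u k) (u (k + 1)) ≤ L n / n := by
    intro n hn
    have hlt : intrinsicEDist univ x z < ENNReal.ofReal (L n) := by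
      rw [← hX x z, edist_dist]
      apply (ENNReal.ofReal_lt_ofReal_iff_of_nonneg dist_nonneg).2
      have : (0 : ℝ) < 1 / ((n : ℝ) + 1) := by positivity
      simp only [hLdef]
      linarith
    obtain ⟨u, h1, h2, -, h3⟩ := exists_chain (hL0 n) hlt hn
    exact ⟨u, h1, h2, h3⟩
  have : Nonempty X := ⟨x⟩
  choose! u hu0 hun hus using hch
  have hev : ∀ᶠ n in (hyperfilter ℕ : Filter ℕ), 1 ≤ n :=
    Nat.hyperfilter_le_atTop (eventually_ge_atTop 1)
  have hLlim : Tendsto L (hyperfilter ℕ) (𝓝 (dist x z)) := by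
    have : Tendsto L atTop (𝓝 (dist x z + 0)) :=
      tendsto_const_nhds.add tendsto_one_div_add_atTop_nhds_zero_nat
    rw [add_zero] at this
    exact this.mono_left Nat.hyperfilter_le_atTop
  obtain ⟨γ, h0, h1, h2, -⟩ := chain_limit (hyperfilter ℕ) Nat.hyperfilter_le_atTop x u L L
    (x := x) (z := z) (Eventually.of_forall hL0)
    (by filter_upwards [hev] with n hn k _ using hus n hn k)
    (by
      filter_upwards [hev] with n hn k hk
      rw [mem_closedBall, dist_comm]
      have h := chain_dist (n := n) (fun k _ => hus n hn k) (Nat.zero_le k) hk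
      rw [hu0 n hn] at h
      refine h.trans ?_
      have hn0 : (0 : ℝ) < n := by exact_mod_cast hn
      have hk' : (k : ℝ) ≤ n := by exact_mod_cast hk
      calc _ ≤ (n : ℝ) * (L n / n) := by
            apply mul_le_mul_of_nonneg_right
            · simpa using hk'
            · have := hL0 n
              positivity
        _ = L n := by field_simp)
    hLlim hLlim
    (tendsto_const_nhds.congr' (by filter_upwards [hev] with n hn using (hu0 n hn).symm))
    (tendsto_const_nhds.congr' (by filter_upwards [hev] with n hn using (hun n hn).symm))
  exact ⟨γ, h0, h1, h2⟩

/-- Short geodesics stay in the ball. -/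
lemma intr_local {X : Type*} [MetricSpace X] [ProperSpace X] (hX : IsLengthSpace X)
    {y x z : X} {R : ℝ} (h : dist x y + dist x z ≤ R) :
    intrinsicEDist (closedBall y R) x z ≤ ENNReal.ofReal (dist x z) := by
  obtain ⟨γ, h0, h1, h2⟩ := exists_geod hX x z
  have := intr_le_of_lip (A := closedBall y R) dist_nonneg γ h2 (by
    intro t ht
    have h3 := h2 0 (by simp) t ht
    rw [h0, zero_sub, abs_neg, abs_of_nonneg ht.1] at h3
    rw [mem_closedBall]
    have h4 := dist_triangle_left (γ t) y x
    have h5 : dist x z * t ≤ dist x z := mul_le_of_le_one_right dist_nonneg ht.2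
    linarith)
  rwa [h0, h1] at this

/-- Pulling a point towards the centre. -/
lemma exists_pull {X : Type*} [MetricSpace X] [ProperSpace X] (hX : IsLengthSpace X)
    {y x : X} {R d : ℝ} (hd : 0 ≤ d) (hdR : d ≤ R) (hx : x ∈ closedBall y R) :
    ∃ x', dist x' y ≤ R - d ∧ intrinsicEDist (closedBall y R) x x' ≤ ENNReal.ofReal d := by
  rw [mem_closedBall] at hx
  rcases le_or_gt (dist x y) d with h | h
  · refine ⟨y, by simpa using hdR, ?_⟩
    rw [intr_comm]
    refine (intr_local hX (by simpa [dist_comm] using hx)).trans ?_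
    rw [dist_comm]
    exact ENNReal.ofReal_le_ofReal h
  · obtain ⟨γ, h0, h1, h2⟩ := exists_geod hX y x
    have hD : 0 < dist y x := by rw [dist_comm]; linarith
    have hdD : d / dist y x ≤ 1 := by
      rw [div_le_one hD, dist_comm]; exact h.le
    have hdD0 : 0 ≤ d / dist y x := by positivity
    have ht : 1 - d / dist y x ∈ Icc (0 : ℝ) 1 := ⟨by linarith, by linarith⟩
    have e1 := h2 0 (by simp) _ ht
    have e2 := h2 _ ht 1 (by simp)
    rw [h0, zero_sub, abs_neg, abs_of_nonneg ht.1, mul_sub, mul_div_cancel₀ _ hD.ne', mul_one] at e1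
    rw [h1, sub_sub_cancel_left, abs_neg, abs_of_nonneg hdD0, mul_div_cancel₀ _ hD.ne'] at e2
    set x' := γ (1 - d / dist y x)
    rw [dist_comm y x', dist_comm y x] at e1
    refine ⟨x', by linarith, ?_⟩
    rw [intr_comm]
    exact (intr_local hX (by linarith)).trans (ENNReal.ofReal_le_ofReal e2)

lemma intr_of_chain {X : Type*} [MetricSpace X] [ProperSpace X] (hX : IsLengthSpace X)
    {y : X} {R r s : ℝ} (hs : 0 ≤ s) (hrs : r + s ≤ R) (u : ℕ → X) (n : ℕ)
    (hu : ∀ k ≤ n, u k ∈ closedBall y r) (hstep : ∀ k < n, dist (u k) (u (k + 1)) ≤ s) :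
    intrinsicEDist (closedBall y R) (u 0) (u n) ≤ ENNReal.ofReal (n * s) := by
  induction n with
  | zero =>
    have h0 := hu 0 le_rfl
    rw [mem_closedBall] at h0
    have := intr_local hX (y := y) (x := u 0) (z := u 0) (R := R) (by rw [dist_self]; linarith)
    simpa using this
  | succ n ih =>
    have h1 := ih (fun k hk => hu k (by omega)) (fun k hk => hstep k (by omega))
    have h2 := hstep n (by omega)
    have h3 := hu n (by omega)
    rw [mem_closedBall] at h3
    have h4 := (intr_local hX (y := y) (x := u n) (z := u (n + 1)) (R := R) (by linarith)).trans
      (ENNReal.ofReal_le_ofReal h2)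
    have := intr_tri (by positivity) hs h1 h4
    convert this using 2
    push_cast
    ring

/-- The intrinsic metric of a closed ball induces the restricted topology. -/
lemma intr_cont {X ι : Type*} [MetricSpace X] [ProperSpace X] (hX : IsLengthSpace X)
    (U : Ultrafilter ι) {y a : X} {R δ : ℝ} (hR : 0 < R) (hδ : 0 < δ) {v : ι → X}
    (hv : ∀ᶠ n in (U : Filter ι), v n ∈ closedBall y R) (hlim : Tendsto v U (𝓝 a)) :
    ∀ᶠ n in (U : Filter ι), intrinsicEDist (closedBall y R) (v n) a ≤ ENNReal.ofReal δ := by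
  set d := min (δ / 3) R with hd
  have hd0 : 0 < d := lt_min (by linarith) hR
  have hd1 : d ≤ δ / 3 := min_le_left _ _
  have hpull : ∀ x, x ∈ closedBall y R → ∃ x', dist x' y ≤ R - d ∧
      intrinsicEDist (closedBall y R) x x' ≤ ENNReal.ofReal d :=
    fun x hx => exists_pull hX hd0.le (min_le_right _ _) hx
  choose! π hπ1 hπ2 using hpull
  obtain ⟨b, hb, hblim⟩ := ultra_lim U (isCompact_closedBall y (R - d)) (v := fun n => π (v n))
    (by filter_upwards [hv] with n hn using hπ1 _ hn)
  rw [mem_closedBall] at hb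
  have hba : dist b a ≤ d := by
    refine le_of_tendsto (hblim.dist hlim) ?_
    filter_upwards [hv] with n hn
    rw [dist_comm]
    exact dist_le_of_intr hd0.le (hπ2 _ hn)
  have hIba : intrinsicEDist (closedBall y R) b a ≤ ENNReal.ofReal d :=
    (intr_local hX (by linarith)).trans (ENNReal.ofReal_le_ofReal hba)
  have hnear : ∀ᶠ n in (U : Filter ι), dist (π (v n)) b < d :=
    hblim.eventually (ball_mem_nhds b hd0)
  filter_upwards [hv, hnear] with n hn hn2
  have h1 : intrinsicEDist (closedBall y R) (π (v n)) b ≤ ENNReal.ofReal d := by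
    rw [intr_comm]
    rw [dist_comm] at hn2
    exact (intr_local hX (by linarith)).trans (ENNReal.ofReal_le_ofReal hn2.le)
  exact (intr_tri (by linarith) hd0.le (intr_tri hd0.le hd0.le (hπ2 _ hn) h1) hIba).trans
    (ENNReal.ofReal_le_ofReal (by linarith))

/-- Uniform comparison of chains in slightly larger balls with the intrinsic metric. -/
lemma intr_uniform {Y : Type*} [MetricSpace Y] [ProperSpace Y] (hY : IsLengthSpace Y)
    (y : Y) {R C ε : ℝ} (hR : 0 < R) (hε : 0 < ε) :
    ∃ n : ℕ, 1 ≤ n ∧ ∃ δ > 0, ∀ L ∈ Icc 0 C, ∀ u : ℕ → Y,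
      u 0 ∈ closedBall y R → u n ∈ closedBall y R →
      (∀ k ≤ n, u k ∈ closedBall y (R + δ)) → (∀ k < n, dist (u k) (u (k + 1)) ≤ L / n) →
      intrinsicEDist (closedBall y R) (u 0) (u n) ≤ ENNReal.ofReal (L + ε) := by
  by_contra! hcon
  have hcon' : ∀ n : ℕ, 1 ≤ n → _ := fun n hn =>
    hcon n hn (1 / ((n : ℝ) + 1)) (by positivity)
  have : Nonempty Y := ⟨y⟩
  choose! L hL u hu0 hun hub hus hbad using hcon'
  set U := hyperfilter ℕ
  have hev : ∀ᶠ n in (U : Filter ℕ), 1 ≤ n :=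
    Nat.hyperfilter_le_atTop (eventually_ge_atTop 1)
  have ev0 : ∀ᶠ n in (U : Filter ℕ), u n 0 ∈ closedBall y R := by
    filter_upwards [hev] with n hn using hu0 n hn
  have evn : ∀ᶠ n in (U : Filter ℕ), u n n ∈ closedBall y R := by
    filter_upwards [hev] with n hn using hun n hn
  obtain ⟨l, hl, hllim⟩ := ultra_lim U (isCompact_Icc (a := (0 : ℝ)) (b := C)) (v := L)
    (by filter_upwards [hev] with n hn using hL n hn)
  obtain ⟨a, -, halim⟩ := ultra_lim U (isCompact_closedBall y R) ev0
  obtain ⟨b, -, hblim⟩ := ultra_lim U (isCompact_closedBall y R) evn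
  have hrlim : Tendsto (fun n : ℕ => R + 1 / ((n : ℝ) + 1)) U (𝓝 R) := by
    have : Tendsto (fun n : ℕ => R + 1 / ((n : ℝ) + 1)) atTop (𝓝 (R + 0)) :=
      tendsto_const_nhds.add tendsto_one_div_add_atTop_nhds_zero_nat
    rw [add_zero] at this
    exact this.mono_left Nat.hyperfilter_le_atTop
  obtain ⟨γ, h0, h1, h2, h3⟩ := chain_limit U Nat.hyperfilter_le_atTop y u L
    (fun n : ℕ => R + 1 / ((n : ℝ) + 1))
    (by filter_upwards [hev] with n hn using (hL n hn).1)
    (by filter_upwards [hev] with n hn using hus n hn)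
    (by filter_upwards [hev] with n hn using hub n hn) hllim hrlim halim hblim
  have hI := intr_le_of_lip hl.1 γ h2 h3
  rw [h0, h1] at hI
  have hLl : ∀ᶠ n in (U : Filter ℕ), l - ε / 3 < L n :=
    hllim.eventually (lt_mem_nhds (by linarith))
  obtain ⟨n, hn, c1, c2, c3⟩ := (hev.and ((intr_cont hY U hR (show 0 < ε / 3 by linarith)
    ev0 halim).and ((intr_cont hY U hR (show 0 < ε / 3 by linarith) evn hblim).and hLl))).exists
  refine absurd (hbad n hn) (not_lt.2 ?_)
  rw [intr_comm] at c2
  exact (intr_tri (add_nonneg (by linarith) hl.1) (by linarith)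
    (intr_tri (by linarith) hl.1 c1 hI) c2).trans (ENNReal.ofReal_le_ofReal (by linarith))

/-! ### From restricted to intrinsic approximations -/

lemma core_AB {Y : Type} [MetricSpace Y] [ProperSpace Y] (hY : IsLengthSpace Y) (y : Y)
    {R ε : ℝ} (hR : 0 < R) (hε : 0 < ε) :
    ∃ δ > 0, δ ≤ ε ∧ ∃ e > 0, ∀ (X : Type) [MetricSpace X] [ProperSpace X],
      IsLengthSpace X → ∀ (p : X) (f : X → Y), f p = y →
      RestrictedHA e (closedBall p (R + 1)) (closedBall y (R + 1)) f →
      ∃ F : X → Y, F p = y ∧ IntrinsicHA ε (closedBall p (R + δ)) (closedBall y R) F := by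
  obtain ⟨n, hn, δ₁, hδ₁, hunif⟩ := intr_uniform hY y (R := R) (C := 2 * R + 10) (ε := ε / 4) hR
    (by linarith)
  obtain ⟨δ, hδ0, hδa, hδb, hδc, hδd⟩ : ∃ δ > 0, δ ≤ δ₁ / 2 ∧ δ ≤ ε / 20 ∧ δ ≤ R / 20 ∧
      δ ≤ 1 / 20 :=
    ⟨min (min (δ₁ / 2) (ε / 20)) (min (R / 20) (1 / 20)), by positivity,
      (min_le_left _ _).trans (min_le_left _ _), (min_le_left _ _).trans (min_le_right _ _),
      (min_le_right _ _).trans (min_le_left _ _), (min_le_right _ _).trans (min_le_right _ _)⟩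
  obtain ⟨m, hm⟩ := exists_nat_gt ((2 * R + 10) / (δ / 4))
  have hm0 : (0 : ℝ) < m := lt_trans (by positivity) hm
  have hm1 : 1 ≤ m := by exact_mod_cast hm0
  have hmC : (2 * R + 10) / m ≤ δ / 4 := by
    rw [div_lt_iff₀ (by positivity)] at hm
    rw [div_le_iff₀ hm0]
    linarith
  have hn0 : (0 : ℝ) < n := by exact_mod_cast hn
  obtain ⟨e, he0, hea, heb, hec⟩ : ∃ e > 0, e ≤ δ / 20 ∧ n * e ≤ δ ∧ m * (3 * e) ≤ δ := by
    refine ⟨min (δ / 20) (min (δ / n) (δ / (3 * m))), by positivity, min_le_left _ _, ?_, ?_⟩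
    · rw [← le_div_iff₀' hn0]
      exact (min_le_right _ _).trans (min_le_left _ _)
    · rw [← mul_assoc, mul_comm (m : ℝ) 3, ← le_div_iff₀' (by positivity)]
      exact (min_le_right _ _).trans (min_le_right _ _)
  refine ⟨δ, hδ0, by linarith, e, he0, ?_⟩
  intro X _ _ hX p f hfp ⟨hmaps, honto, hdist⟩
  have hpmem : p ∈ closedBall p (R + 1) := mem_closedBall_self (by linarith)
  have hd1 : ∀ a ∈ closedBall p (R + 1), ∀ b ∈ closedBall p (R + 1),
      dist (f a) (f b) ≤ dist a b + e ∧ dist a b ≤ dist (f a) (f b) + e := by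
    intro a ha b hb
    have := abs_le.1 (hdist a ha b hb)
    constructor <;> linarith
  -- the retraction towards the centre
  have hpull : ∀ a : X, ∃ a', (a = p → a' = p) ∧ (a ∈ closedBall p (R + δ) →
      dist a' p ≤ R - 2 * δ ∧
      intrinsicEDist (closedBall p (R + δ)) a a' ≤ ENNReal.ofReal (3 * δ)) := by
    intro a
    by_cases hap : a = p
    · subst hap
      refine ⟨a, fun _ => rfl, fun _ => ⟨by rw [dist_self]; linarith, ?_⟩⟩
      refine (intr_local hX (by rw [dist_self]; linarith)).trans (ENNReal.ofReal_le_ofReal ?_)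
      rw [dist_self]; linarith
    · by_cases ha : a ∈ closedBall p (R + δ)
      · obtain ⟨a', h1, h2⟩ := exists_pull hX (d := 3 * δ) (by linarith) (by linarith) ha
        exact ⟨a', fun h => absurd h hap, fun _ => ⟨by linarith, h2⟩⟩
      · exact ⟨a, fun h => absurd h hap, fun h => absurd h ha⟩
  choose π hπp hπ using hpull
  have hπmem : ∀ a ∈ closedBall p (R + δ), π a ∈ closedBall p (R + 1) := by
    intro a ha
    rw [mem_closedBall]
    linarith [(hπ a ha).1]
  have hFR : ∀ a ∈ closedBall p (R + δ), dist (f (π a)) y ≤ R - δ := by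
    intro a ha
    have := (hd1 _ (hπmem a ha) p hpmem).1
    rw [hfp] at this
    linarith [(hπ a ha).1]
  refine ⟨fun a => f (π a), by simp only [hπp p rfl, hfp], ?_, ?_, ?_⟩
  · intro a ha
    rw [mem_closedBall]
    linarith [hFR a ha]
  · intro b hb
    obtain ⟨b', hb1, hb2⟩ := exists_pull hY (d := 5 * δ) (by linarith) (by linarith) hb
    obtain ⟨a, ha, hab⟩ := honto b' (by rw [mem_closedBall]; linarith)
    have hap : dist a p ≤ R + δ := by
      have h1 := (hd1 a ha p hpmem).2
      rw [hfp] at h1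
      linarith [dist_triangle (f a) b' y]
    refine ⟨a, hap, ?_⟩
    have haa : dist a (π a) ≤ 3 * δ := dist_le_of_intr (by linarith) (hπ a hap).2
    have h2 := (hd1 a ha _ (hπmem a hap)).1
    have h3 : dist b' (f (π a)) ≤ 4 * δ := by
      linarith [dist_triangle_left b' (f (π a)) (f a)]
    have h4 := (intr_local hY (y := y) (x := b') (z := f (π a)) (R := R) (by linarith)).trans
      (ENNReal.ofReal_le_ofReal h3)
    rw [intr_comm]
    exact (intr_tri (by linarith) (by linarith) hb2 h4).trans
      (ENNReal.ofReal_le_ofReal (by linarith))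
  · intro a₁ ha₁ a₂ ha₂
    obtain ⟨hp1, hq1⟩ := hπ a₁ ha₁
    obtain ⟨hp2, hq2⟩ := hπ a₂ ha₂
    set x₁ := π a₁
    set x₂ := π a₂
    have hF1 : dist (f x₁) y ≤ R - δ := hFR a₁ ha₁
    have hF2 : dist (f x₂) y ≤ R - δ := hFR a₂ ha₂
    have hx1 : x₁ ∈ closedBall p (R + 1) := hπmem a₁ ha₁
    have hx2 : x₂ ∈ closedBall p (R + 1) := hπmem a₂ ha₂
    constructor
    · -- lifting chains from `Y` to `X`
      have hfin : intrinsicEDist (closedBall y R) (f x₁) (f x₂) ≤ ENNReal.ofReal (R + R) := by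
        refine intr_tri (y := y) hR.le hR.le ?_ ?_
        · rw [intr_comm]
          refine (intr_local hY (by rw [dist_self, dist_comm]; linarith)).trans
            (ENNReal.ofReal_le_ofReal (by rw [dist_comm]; linarith))
        · refine (intr_local hY (by rw [dist_self, dist_comm]; linarith)).trans
            (ENNReal.ofReal_le_ofReal (by rw [dist_comm]; linarith))
      obtain ⟨l, hl0, hl⟩ : ∃ l : ℝ, 0 ≤ l ∧
          intrinsicEDist (closedBall y R) (f x₁) (f x₂) = ENNReal.ofReal l :=
        ⟨_, ENNReal.toReal_nonneg,
          (ENNReal.ofReal_toReal (ne_top_of_le_ne_top ENNReal.ofReal_ne_top hfin)).symm⟩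
      have hl2 : l ≤ R + R := by
        rw [hl] at hfin
        exact (ENNReal.ofReal_le_ofReal_iff (by linarith)).1 hfin
      obtain ⟨v, hv0, hvm, hvA, hvs⟩ := exists_chain (L := l + δ) (by linarith)
        (by rw [hl]; exact (ENNReal.ofReal_lt_ofReal_iff_of_nonneg hl0).2 (by linarith)) hm1
      have hlift : ∀ k, ∃ w ∈ closedBall p (R + 1), dist (f w) (v k) ≤ e ∧
          (k = 0 → w = x₁) ∧ (k = m → w = x₂) := by
        intro k
        by_cases h0 : k = 0
        · refine ⟨x₁, hx1, ?_, fun _ => rfl, fun h => by omega⟩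
          rw [h0, hv0, dist_self]; exact he0.le
        · by_cases h1 : k = m
          · refine ⟨x₂, hx2, ?_, fun h => by omega, fun _ => rfl⟩
            rw [h1, hvm, dist_self]; exact he0.le
          · obtain ⟨w, hw1, hw2⟩ := honto (v k)
              (closedBall_subset_closedBall (by linarith) (hvA k))
            exact ⟨w, hw1, hw2, fun h => absurd h h0, fun h => absurd h h1⟩
      choose w hw1 hw2 hw3 hw4 using hlift
      have hLm : (l + δ) / m ≤ δ / 4 := by
        refine le_trans ?_ hmC
        exact div_le_div_of_nonneg_right (by linarith) hm0.le
      have hLm0 : 0 ≤ (l + δ) / m := by positivity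
      have hch := intr_of_chain hX (y := p) (R := R + δ) (r := R + 2 * e)
        (s := (l + δ) / m + 3 * e) (by positivity) (by linarith) w m
        (by
          intro k _
          have h1 := (hd1 _ (hw1 k) p hpmem).2
          rw [hfp] at h1
          have h2 := hvA k
          rw [mem_closedBall] at h2 ⊢
          linarith [dist_triangle (f (w k)) (v k) y, hw2 k])
        (by
          intro k _
          have h1 := (hd1 _ (hw1 k) _ (hw1 (k + 1))).2
          have h2 := dist_triangle4 (f (w k)) (v k) (v (k + 1)) (f (w (k + 1)))
          have h3 := hw2 (k + 1)
          rw [dist_comm] at h3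
          linarith [hvs k, hw2 k])
      rw [hw3 0 rfl, hw4 m rfl] at hch
      have hms : (m : ℝ) * ((l + δ) / m + 3 * e) ≤ l + 2 * δ := by
        rw [mul_add, mul_div_cancel₀ _ hm0.ne']
        linarith
      have hch' := hch.trans (ENNReal.ofReal_le_ofReal hms)
      rw [intr_comm] at hq2
      rw [hl, ← ENNReal.ofReal_add hl0 hε.le]
      exact (intr_tri (by linarith) (by linarith)
        (intr_tri (by linarith) (by linarith) hq1 hch') hq2).trans
        (ENNReal.ofReal_le_ofReal (by linarith))
    · -- pushing chains from `X` to `Y`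
      have hfin : ∀ x : X, dist x p ≤ R + δ →
          intrinsicEDist (closedBall p (R + δ)) p x ≤ ENNReal.ofReal (R + δ) := by
        intro x hx
        rw [dist_comm] at hx
        exact (intr_local hX (by rw [dist_self]; linarith)).trans (ENNReal.ofReal_le_ofReal hx)
      have hfin2 : intrinsicEDist (closedBall p (R + δ)) a₁ a₂ ≤
          ENNReal.ofReal ((R + δ) + (R + δ)) := by
        refine intr_tri (y := p) (by linarith) (by linarith) ?_ (hfin a₂ ha₂)
        rw [intr_comm]
        exact hfin a₁ ha₁
      obtain ⟨l, hl0, hl⟩ : ∃ l : ℝ, 0 ≤ l ∧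
          intrinsicEDist (closedBall p (R + δ)) a₁ a₂ = ENNReal.ofReal l :=
        ⟨_, ENNReal.toReal_nonneg,
          (ENNReal.ofReal_toReal (ne_top_of_le_ne_top ENNReal.ofReal_ne_top hfin2)).symm⟩
      have hl2 : l ≤ (R + δ) + (R + δ) := by
        rw [hl] at hfin2
        exact (ENNReal.ofReal_le_ofReal_iff (by linarith)).1 hfin2
      rw [intr_comm] at hq1
      have hI : intrinsicEDist (closedBall p (R + δ)) x₁ x₂ ≤
          ENNReal.ofReal (3 * δ + l + 3 * δ) :=
        intr_tri (by linarith) (by linarith)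
          (intr_tri (by linarith) (by linarith) hq1 hl.le) hq2
      obtain ⟨v, hv0, hvn, hvA, hvs⟩ := exists_chain (L := l + 7 * δ) (by linarith)
        (hI.trans_lt ((ENNReal.ofReal_lt_ofReal_iff_of_nonneg (by linarith)).2
          (by linarith))) hn
      have hvA' : ∀ k, v k ∈ closedBall p (R + 1) := fun k =>
        closedBall_subset_closedBall (by linarith) (hvA k)
      have hres := hunif (l + 7 * δ + n * e) ⟨by positivity, by linarith⟩ (fun k => f (v k))
        (by simp only [hv0, mem_closedBall]; linarith)
        (by simp only [hvn, mem_closedBall]; linarith)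
        (by
          intro k _
          have h1 := (hd1 _ (hvA' k) p hpmem).1
          rw [hfp] at h1
          have h2 := hvA k
          rw [mem_closedBall] at h2 ⊢
          linarith)
        (by
          intro k _
          have h1 := (hd1 _ (hvA' k) _ (hvA' (k + 1))).1
          rw [add_div, mul_div_cancel_left₀ _ hn0.ne']
          linarith [hvs k])
      simp only [hv0, hvn] at hres
      rw [hl, ← ENNReal.ofReal_add hl0 hε.le]
      exact hres.trans (ENNReal.ofReal_le_ofReal (by linarith))

lemma exists_diag {Q : ℕ → ℕ → Prop} (h : ∀ k, ∃ N, ∀ i ≥ N, Q k i) :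
    ∃ κ : ℕ → ℕ, Tendsto κ atTop atTop ∧ ∃ N, ∀ i ≥ N, Q (κ i) i := by
  classical
  choose N hN using h
  refine ⟨fun i => Nat.findGreatest (fun k => N k ≤ i) i, ?_, N 0, ?_⟩
  · rw [Filter.tendsto_atTop]
    intro b
    filter_upwards [eventually_ge_atTop b, eventually_ge_atTop (N b)] with i h1 h2
    exact Nat.le_findGreatest h1 h2
  · intro i hi
    apply hN
    exact Nat.findGreatest_spec (P := fun k => N k ≤ i) (Nat.zero_le i) hi

lemma IntrinsicHA.mono {X Y : Type*} [MetricSpace X] [MetricSpace Y] {ε ε' : ℝ} (h : ε ≤ ε')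
    {A : Set X} {B : Set Y} {f : X → Y} (hf : IntrinsicHA ε A B f) : IntrinsicHA ε' A B f := by
  have h' := ENNReal.ofReal_le_ofReal h
  refine ⟨hf.1, fun b hb => ?_, fun a ha b hb => ?_⟩
  · obtain ⟨a, ha, hab⟩ := hf.2.1 b hb
    exact ⟨a, ha, hab.trans h'⟩
  · obtain ⟨h1, h2⟩ := hf.2.2 a ha b hb
    exact ⟨h1.trans (by gcongr), h2.trans (by gcongr)⟩

lemma dir_AB (X : ℕ → PointedMetricSpace) (Y : PointedMetricSpace)
    (hXlen : ∀ i, IsLengthSpace (X i).carrier)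
    (hXproper : ∀ i, ProperSpace (X i).carrier)
    (hYlen : IsLengthSpace Y.carrier)
    (hYproper : ProperSpace Y.carrier) (h : ConvergesPGH X Y) : ConvergesPGHIntrinsic X Y := by
  intro R hR
  have hcore := fun k : ℕ => core_AB hYlen Y.pt hR (show (0 : ℝ) < 1 / ((k : ℝ) + 1) by positivity)
  choose δ hδ0 hδ e he0 hcore using hcore
  obtain ⟨κ, hκ, N, hN⟩ := exists_diag (Q := fun k i => ∃ F : (X i).carrier → Y.carrier,
      F (X i).pt = Y.pt ∧ IntrinsicHA (1 / ((k : ℝ) + 1)) (closedBall (X i).pt (R + δ k))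
        (closedBall Y.pt R) F) (by
    intro k
    obtain ⟨N, hN⟩ := h (R + 1) (by linarith) (e k) (he0 k)
    refine ⟨N, fun i hi => ?_⟩
    obtain ⟨f, hf1, hf2⟩ := hN i hi
    haveI := hXproper i
    exact hcore k (X i).carrier (hXlen i) (X i).pt f hf1 hf2)
  have hlim : Tendsto (fun i => 1 / ((κ i : ℝ) + 1)) atTop (𝓝 0) :=
    tendsto_one_div_add_atTop_nhds_zero_nat.comp hκ
  refine ⟨fun i => R + δ (κ i), ?_, ?_⟩
  · have h1 : Tendsto (fun i => δ (κ i)) atTop (𝓝 0) :=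
      squeeze_zero (fun i => (hδ0 _).le) (fun i => hδ _) hlim
    simpa using h1.const_add R
  · intro ε hε
    obtain ⟨N', hN'⟩ := eventually_atTop.1 (hlim.eventually (eventually_le_nhds hε))
    refine ⟨max N N', fun i hi => ?_⟩
    obtain ⟨F, hF1, hF2⟩ := hN i ((le_max_left _ _).trans hi)
    exact ⟨F, hF1, hF2.mono (hN' i ((le_max_right _ _).trans hi))⟩

/-! ### From intrinsic to restricted approximations -/

lemma core_BA {X Y : Type} [MetricSpace X] [ProperSpace X] [MetricSpace Y] [ProperSpace Y]
    (hX : IsLengthSpace X) (hY : IsLengthSpace Y) (p : X) (y : Y) {R r e : ℝ} (hR : 0 < R)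
    (hr : 3 * R ≤ r) (he : 0 < e) (heR : e ≤ R / 4) (f : X → Y) (hfp : f p = y)
    (hf : IntrinsicHA e (closedBall p r) (closedBall y (4 * R)) f) :
    ∃ F : X → Y, F p = y ∧ RestrictedHA (4 * e) (closedBall p R) (closedBall y R) F := by
  obtain ⟨hmaps, honto, hdist⟩ := hf
  have hsub : closedBall p R ⊆ closedBall p r := closedBall_subset_closedBall (by linarith)
  have hpr : p ∈ closedBall p r := mem_closedBall_self (by linarith)
  -- distances from the intrinsic ones
  have hX' : ∀ a ∈ closedBall p R, ∀ b ∈ closedBall p R,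
      intrinsicEDist (closedBall p r) a b ≤ ENNReal.ofReal (dist a b) := by
    intro a ha b hb
    rw [mem_closedBall] at ha hb
    apply intr_local hX
    linarith [dist_triangle_right a b p]
  have hY' : ∀ a b : Y, dist a y ≤ R + e → dist b y ≤ R + e →
      intrinsicEDist (closedBall y (4 * R)) a b ≤ ENNReal.ofReal (dist a b) := by
    intro a b ha hb
    apply intr_local hY
    linarith [dist_triangle_right a b y]
  have hup : ∀ a ∈ closedBall p R, ∀ b ∈ closedBall p R, dist (f a) (f b) ≤ dist a b + e := by
    intro a ha b hb
    have h1 := (hdist a (hsub ha) b (hsub hb)).2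
    apply dist_le_of_intr (add_nonneg dist_nonneg he.le) (h1.trans _)
    rw [ENNReal.ofReal_add dist_nonneg he.le]
    gcongr
    exact hX' a ha b hb
  have hlow : ∀ a ∈ closedBall p r, ∀ b ∈ closedBall p r, dist (f a) y ≤ R + e →
      dist (f b) y ≤ R + e → dist a b ≤ dist (f a) (f b) + e := by
    intro a ha b hb ha' hb'
    have h1 := (hdist a ha b hb).1
    apply dist_le_of_intr (add_nonneg dist_nonneg he.le) (h1.trans _)
    rw [ENNReal.ofReal_add dist_nonneg he.le]
    gcongr
    exact hY' _ _ ha' hb'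
  have hfR : ∀ a ∈ closedBall p R, dist (f a) y ≤ R + e := by
    intro a ha
    have := hup a ha p (mem_closedBall_self hR.le)
    rw [hfp] at this
    rw [mem_closedBall] at ha
    linarith
  have hpull : ∀ a : X, ∃ b : Y, (a = p → b = y) ∧
      (a ∈ closedBall p R → dist b y ≤ R ∧ dist (f a) b ≤ e) := by
    intro a
    by_cases hap : a = p
    · subst hap
      exact ⟨y, fun _ => rfl, fun _ => ⟨by rw [dist_self]; exact hR.le,
        by rw [hfp, dist_self]; exact he.le⟩⟩
    · by_cases ha : a ∈ closedBall p R
      · obtain ⟨b, h1, h2⟩ := exists_pull hY (R := R + e) (d := e) he.le (by linarith) (hfR a ha)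
        exact ⟨b, fun h => absurd h hap, fun _ => ⟨by linarith, dist_le_of_intr he.le h2⟩⟩
      · exact ⟨y, fun h => absurd h hap, fun h => absurd h ha⟩
  choose F hFp hF using hpull
  refine ⟨F, hFp p rfl, fun a ha => (hF a ha).1, ?_, ?_⟩
  · intro b hb
    obtain ⟨b', hb1, hb2⟩ := exists_pull hY (d := 2 * e) (by linarith) (by linarith) hb
    obtain ⟨a, ha, hab⟩ := honto b' (by rw [mem_closedBall]; linarith)
    have hab' := dist_le_of_intr he.le hab
    have hbb := dist_le_of_intr (by linarith) hb2
    have hfa : dist (f a) y ≤ R - e := by linarith [dist_triangle (f a) b' y]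
    have hap : dist a p ≤ R := by
      have := hlow a ha p hpr (by linarith) (by rw [hfp, dist_self]; linarith)
      rw [hfp] at this
      linarith
    refine ⟨a, hap, ?_⟩
    have h1 := (hF a hap).2
    rw [dist_comm] at h1 hbb
    linarith [dist_triangle4 (F a) (f a) b' b]
  · intro a ha b hb
    have h1 := (hF a ha).2
    have h2 := (hF b hb).2
    have h3 := hup a ha b hb
    have h4 := hlow a (hsub ha) b (hsub hb) (hfR a ha) (hfR b hb)
    have h5 := dist_triangle4 (f a) (F a) (F b) (f b)
    have h6 := dist_triangle4 (F a) (f a) (f b) (F b)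
    rw [dist_comm (F b) (f b)] at h5
    rw [dist_comm (F a) (f a)] at h6
    rw [abs_le]
    constructor <;> linarith

lemma dir_BA (X : ℕ → PointedMetricSpace) (Y : PointedMetricSpace)
    (hXlen : ∀ i, IsLengthSpace (X i).carrier)
    (hXproper : ∀ i, ProperSpace (X i).carrier)
    (hYlen : IsLengthSpace Y.carrier)
    (hYproper : ProperSpace Y.carrier) (h : ConvergesPGHIntrinsic X Y) : ConvergesPGH X Y := by
  intro R hR ε hε
  obtain ⟨r, hr, hconv⟩ := h (4 * R) (by linarith)
  have he0 : 0 < min (ε / 4) (R / 4) := by positivity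
  obtain ⟨N, hN⟩ := hconv _ he0
  obtain ⟨N', hN'⟩ := eventually_atTop.1
    (hr.eventually (eventually_ge_nhds (show 3 * R < 4 * R by linarith)))
  refine ⟨max N N', fun i hi => ?_⟩
  obtain ⟨f, hf1, hf2⟩ := hN i ((le_max_left _ _).trans hi)
  haveI := hXproper i
  obtain ⟨F, hF1, hF2, hF3, hF4⟩ := core_BA (hXlen i) hYlen (X i).pt Y.pt hR
    (hN' i ((le_max_right _ _).trans hi)) he0 (min_le_right _ _) f hf1 hf2
  have hle : 4 * min (ε / 4) (R / 4) ≤ ε := by linarith [min_le_left (ε / 4) (R / 4)]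
  refine ⟨F, hF1, hF2, fun b hb => ?_, fun a ha b hb => (hF4 a ha b hb).trans hle⟩
  obtain ⟨a, ha, hab⟩ := hF3 b hb
  exact ⟨a, ha, hab.trans hle⟩

/-- For complete, locally compact (proper) length spaces, the two
definitions of pointed Gromov–Hausdorff convergence — convergence of closed `R`-balls
with restricted metrics, and convergence of closed `R_i`-balls (`R_i → R`) with
intrinsic metrics — are equivalent. -/
theorem pointedGH_definitions_equivalent
    (X : ℕ → PointedMetricSpace) (Y : PointedMetricSpace)
    (hXlen : ∀ i, IsLengthSpace (X i).carrier)
    (hXproper : ∀ i, ProperSpace (X i).carrier)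
    (hXcomplete : ∀ i, CompleteSpace (X i).carrier)
    (hYlen : IsLengthSpace Y.carrier)
    (hYproper : ProperSpace Y.carrier) (hYcomplete : CompleteSpace Y.carrier) :
    ConvergesPGH X Y ↔ ConvergesPGHIntrinsic X Y := by
  exact ⟨dir_AB X Y hXlen hXproper hYlen hYproper, dir_BA X Y hXlen hXproper hYlen hYproper⟩
end
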